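/- arXiv:math/0609513 — 2 statements merged into one kernel-verified Lean document; each statement's English description precedes it below -/
import Mathlib

section
/- Let N > 4 and 0 < m < (N-4)/(N-2), and set α = (N-2)(1-m)/2 - 1. Let u and v be two solutions of the fast diffusion equation on ℝ^N × (0,T) whose initial values both satisfy (C*T/(k₁+|x|²))^{1/(1-m)} ≤ u₀(x), v₀(x) ≤ (C*T/(k₂+|x|²))^{1/(1-m)} for some k₁ > k₂ > 0, and suppose B_{k₁} ≤ u, v ≤ B_{k₂} on ℝ^N × (0,T). Write B̃ = B̃_{k₂} and let ũ, ṽ be the rescaled solutions, with ũ₀ = ũ(·,-log T), ṽ₀ = ṽ(·,-log T). If ∫_{ℝ^N} |ũ₀ - ṽ₀| B̃^α dx < ∞, then for every τ ≥ -log T the function ũ(·,τ) - ṽ(·,τ) belongs to L¹(B̃^α, ℝ^N); more precisely, for each τ there is a constant C(τ) with ∫_{ℝ^N} |ũ(x,τ) - ṽ(x,τ)| B̃^α(x) dx ≤ ∫_{ℝ^N} |ũ₀ - ṽ₀| B̃^α dx + C(τ). -/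
/-!
Only finiteness is at stake: once the left-hand side at time `τ` is finite, it serves as the
constant `C` itself.

In the original variables write `p = u - v` and `q = u ^ m - v ^ m`, so that `∂ₜ p = Δ q`. Since `p`
and `q` have the same sign, Kato's inequality (`kato_lapl`) gives `d/dt ∫ |p| φ ≤ ∫ |q| Δφ` for
every `C²` compactly supported `φ ≥ 0`. Up to a constant, the weight `B̃ ^ α` is
`(k₂ + |x| ^ 2) ^ (-δ)` with `δ = α / (1 - m) = (N - 2) / 2 - 1 / (1 - m) > 0`, which is
superharmonic. Take for `φ` this weight times the cutoff `(1 - |x| ^ 2 / R)₊ ^ 3`; then `Δφ` is at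
most a constant times `1 / R` times the weight on `|x| ^ 2 ≤ R` (`radial_lapl_le`).

The trapping between two Barenblatt solutions, by the mean value theorem, yields
`|q| ≤ K (κ + |x| ^ 2) ^ (-1 / (1 - m))` on `(0, t]` (`abs_pow_sub_le`). The exponents
`1 / (1 - m)` and `δ` add up to `(N - 2) / 2`, so `∫ |q| Δφ` is at most a constant times
`1 / R ∫_{|x| ^ 2 ≤ R} |x| ^ (2 - N)`, which is bounded independently of `R`
(`integral_abs_mul_lapl_tst_le`). Integrating in time from `s > 0`, letting `s → 0` by continuity
of the solutions up to the initial time, and letting `R → ∞` by Fatou's lemma gives finiteness at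
time `t` from finiteness at time `0` (`weighted_propagation`). Passing between the original and the
rescaled variables is a dilation, which changes the weight by bounded factors only
(`lintegral_weight_dilate`).
-/

open MeasureTheory Real Filter Topology RealInnerProductSpace

noncomputable section

abbrev Euc (N : ℕ) := EuclideanSpace ℝ (Fin N)

/-- Laplacian: trace of the second derivative. -/
def lapl {N : ℕ} (f : Euc N → ℝ) (x : Euc N) : ℝ :=
  ∑ i : Fin N, iteratedFDeriv ℝ 2 f x ![EuclideanSpace.single i 1, EuclideanSpace.single i 1]

/-- The constant C* = 2m(N-2-mN)/(1-m). -/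
def Cst (N : ℕ) (m : ℝ) : ℝ := 2 * m * ((N : ℝ) - 2 - m * N) / (1 - m)

/-- β = N/(N-2-Nm). -/
def betaC (N : ℕ) (m : ℝ) : ℝ := (N : ℝ) / ((N : ℝ) - 2 - N * m)

/-- γ = -β/N. -/
def gammaC (N : ℕ) (m : ℝ) : ℝ := -betaC N m / N

/-- Barenblatt solution with extinction time T. -/
def Bb (N : ℕ) (m T k : ℝ) (x : Euc N) (t : ℝ) : ℝ :=
  (Cst N m * (T - t) / (k * (T - t) ^ (2 * gammaC N m) + ‖x‖ ^ 2)) ^ (1 / (1 - m))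

/-- Rescaled Barenblatt profile. -/
def BbTil (N : ℕ) (m k : ℝ) (x : Euc N) : ℝ :=
  (Cst N m / (k + ‖x‖ ^ 2)) ^ (1 / (1 - m))

/-- u is a solution of the fast diffusion equation on ℝ^N × (0,T) with initial value u₀. -/
def IsFDESol (N : ℕ) (m T : ℝ) (u : Euc N → ℝ → ℝ) (u₀ : Euc N → ℝ) : Prop :=
  (∀ x : Euc N, ∀ t ∈ Set.Ioo (0:ℝ) T, 0 < u x t) ∧
  ContDiffOn ℝ (⊤ : ℕ∞) (fun p : Euc N × ℝ => u p.1 p.2) (Set.univ ×ˢ Set.Ioo (0:ℝ) T) ∧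
  ContinuousOn (fun p : Euc N × ℝ => u p.1 p.2) (Set.univ ×ˢ Set.Ico (0:ℝ) T) ∧
  (∀ x, u x 0 = u₀ x) ∧
  (∀ x : Euc N, ∀ t ∈ Set.Ioo (0:ℝ) T,
    deriv (fun s => u x s) t = lapl (fun y => u y t ^ m) x)

/-- Rescaled solution ũ(x,τ) = (T-t)^(-β) u(x (T-t)^γ, t), τ = -log(T-t). -/
def rescaleSol (N : ℕ) (m T : ℝ) (u : Euc N → ℝ → ℝ) (x : Euc N) (τ : ℝ) : ℝ :=
  Real.exp (betaC N m * τ) * u (Real.exp (-gammaC N m * τ) • x) (T - Real.exp (-τ))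

/-- f is radially symmetric. -/
def IsRadial {N : ℕ} (f : Euc N → ℝ) : Prop := ∀ x y : Euc N, ‖x‖ = ‖y‖ → f x = f y

/-! ### Kato's inequality in one direction -/

/-- `√(s ^ 2 + ε ^ 2)` is the smooth regularization of `|s|` used below; it is convex, and its
derivative `s / √(s ^ 2 + ε ^ 2)` regularizes the sign. -/
lemma hasDerivAt_regAbs {ε : ℝ} (hε : 0 < ε) (s : ℝ) :
    HasDerivAt (fun s => √(s ^ 2 + ε ^ 2)) (s / √(s ^ 2 + ε ^ 2)) s := by
  have h : HasDerivAt (fun s : ℝ => s ^ 2 + ε ^ 2) (2 * s) s := by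
    simpa using (hasDerivAt_pow 2 s).add_const (ε ^ 2)
  convert h.sqrt (by positivity) using 1
  rw [mul_div_mul_left _ _ two_ne_zero]

lemma hasDerivAt_regSign {ε : ℝ} (hε : 0 < ε) (s : ℝ) :
    HasDerivAt (fun s => s / √(s ^ 2 + ε ^ 2)) (ε ^ 2 / (√(s ^ 2 + ε ^ 2)) ^ 3) s := by
  have hpos : 0 < √(s ^ 2 + ε ^ 2) := by positivity
  have hsq : √(s ^ 2 + ε ^ 2) ^ 2 = s ^ 2 + ε ^ 2 := Real.sq_sqrt (by positivity)
  refine ((hasDerivAt_id' s).div (hasDerivAt_regAbs hε s) hpos.ne').congr_deriv ?_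
  field_simp
  rw [hsq]; ring

lemma abs_regSign_le (s ε : ℝ) : |s / √(s ^ 2 + ε ^ 2)| ≤ 1 := by
  rw [abs_div, abs_of_nonneg (Real.sqrt_nonneg _)]
  refine div_le_one_of_le₀ ?_ (Real.sqrt_nonneg _)
  rw [← Real.sqrt_sq_eq_abs]
  exact Real.sqrt_le_sqrt (by nlinarith [sq_nonneg ε])

lemma regAbs_le {ε : ℝ} (hε : 0 < ε) (hε1 : ε < 1) (s : ℝ) : √(s ^ 2 + ε ^ 2) ≤ |s| + 1 := by
  rw [Real.sqrt_le_left (by positivity)]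
  nlinarith [abs_nonneg s, sq_abs s]

lemma tendsto_regAbs (s : ℝ) :
    Tendsto (fun ε : ℝ => √(s ^ 2 + ε ^ 2)) (𝓝[>] 0) (𝓝 |s|) := by
  have : Continuous (fun ε : ℝ => √(s ^ 2 + ε ^ 2)) := by fun_prop
  have h := this.tendsto 0
  simp only [ne_eq, OfNat.ofNat_ne_zero, not_false_eq_true, zero_pow, add_zero,
    Real.sqrt_sq_eq_abs] at h
  exact h.mono_left nhdsWithin_le_nhds

/-- The quotient `s / |s|` plays the role of the sign of `s`; it is `0` at `s = 0`. -/
lemma tendsto_regSign (s : ℝ) :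
    Tendsto (fun ε : ℝ => s / √(s ^ 2 + ε ^ 2)) (𝓝[>] 0) (𝓝 (s / |s|)) := by
  rcases eq_or_ne s 0 with rfl | hs
  · simp
  · exact tendsto_const_nhds.div (tendsto_regAbs s) (by positivity)

/-- The fundamental theorem of calculus for `|f|`. The set where `f` vanishes needs no separate
treatment, since the identity is the limit of the one for the regularized absolute value. -/
lemma abs_sub_abs_eq_integral {f f' : ℝ → ℝ} {a b : ℝ} (hab : a ≤ b)
    (hf : ∀ t ∈ Set.Icc a b, HasDerivAt f (f' t) t) (hf' : ContinuousOn f' (Set.Icc a b)) :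
    |f b| - |f a| = ∫ t in a..b, f t / |f t| * f' t := by
  have hfc : ContinuousOn f (Set.Icc a b) := fun t ht => (hf t ht).continuousAt.continuousWithinAt
  have hcont : ∀ ε : ℝ, 0 < ε →
      ContinuousOn (fun t => f t / √(f t ^ 2 + ε ^ 2) * f' t) (Set.Icc a b) := by
    intro ε hε
    refine (hfc.div ?_ ?_).mul hf'
    · exact ((hfc.pow 2).add continuousOn_const).sqrt
    · intro t _; positivity
  have key : ∀ ε : ℝ, 0 < ε →
      ∫ t in a..b, f t / √(f t ^ 2 + ε ^ 2) * f' t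
        = √(f b ^ 2 + ε ^ 2) - √(f a ^ 2 + ε ^ 2) := by
    intro ε hε
    refine intervalIntegral.integral_eq_sub_of_hasDerivAt
      (f := fun t => √(f t ^ 2 + ε ^ 2)) ?_ ?_
    · intro t ht
      rw [Set.uIcc_of_le hab] at ht
      exact (hasDerivAt_regAbs hε (f t)).comp t (hf t ht)
    · refine ContinuousOn.intervalIntegrable ?_
      rw [Set.uIcc_of_le hab]
      exact hcont ε hε
  have l1 : Tendsto (fun ε : ℝ => √(f b ^ 2 + ε ^ 2) - √(f a ^ 2 + ε ^ 2)) (𝓝[>] 0)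
      (𝓝 (|f b| - |f a|)) := (tendsto_regAbs _).sub (tendsto_regAbs _)
  have l2 : Tendsto (fun ε : ℝ => ∫ t in a..b, f t / √(f t ^ 2 + ε ^ 2) * f' t) (𝓝[>] 0)
      (𝓝 (∫ t in a..b, f t / |f t| * f' t)) := by
    refine intervalIntegral.tendsto_integral_filter_of_dominated_convergence (fun t => |f' t|)
      ?_ ?_ ?_ ?_
    · filter_upwards [self_mem_nhdsWithin] with ε hε
      rw [Set.uIoc_of_le hab]
      exact ((hcont ε hε).mono Set.Ioc_subset_Icc_self).aestronglyMeasurable measurableSet_Ioc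
    · refine Eventually.of_forall fun ε => Eventually.of_forall fun t _ => ?_
      rw [Real.norm_eq_abs, abs_mul]
      exact mul_le_of_le_one_left (abs_nonneg _) (abs_regSign_le _ _)
    · refine ContinuousOn.intervalIntegrable ?_
      rw [Set.uIcc_of_le hab]
      exact hf'.abs
    · exact Eventually.of_forall fun t _ => (tendsto_regSign _).mul_const _
  refine tendsto_nhds_unique l1 (l2.congr' ?_)
  filter_upwards [self_mem_nhdsWithin] with ε hε
  exact key ε hε

lemma integral_mul_lineDeriv_eq_neg {N : ℕ} {f f' g g' : Euc N → ℝ} {e : Euc N}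
    (cf : Continuous f) (cf' : Continuous f') (cg : Continuous g) (cg' : Continuous g')
    (s : HasCompactSupport f ∧ HasCompactSupport f' ∨ HasCompactSupport g ∧ HasCompactSupport g')
    (df : ∀ x, HasLineDerivAt ℝ f (f' x) x e) (dg : ∀ x, HasLineDerivAt ℝ g (g' x) x e) :
    ∫ x, f x * g' x = - ∫ x, f' x * g x := by
  have s1 : HasCompactSupport (fun x => f' x * g x) :=
    s.elim (fun h => h.2.mul_right) (fun h => h.1.mul_left)
  have s2 : HasCompactSupport (fun x => f x * g' x) :=
    s.elim (fun h => h.1.mul_right) (fun h => h.2.mul_left)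
  have s3 : HasCompactSupport (fun x => f x * g x) :=
    s.elim (fun h => h.1.mul_right) (fun h => h.1.mul_left)
  exact integral_bilinear_hasLineDerivAt_right_eq_neg_left_of_integrable
      (μ := (volume : Measure (Euc N))) (B := ContinuousLinearMap.mul ℝ ℝ)
      ((cf'.mul cg).integrable_of_hasCompactSupport s1)
      ((cf.mul cg').integrable_of_hasCompactSupport s2)
      ((cf.mul cg).integrable_of_hasCompactSupport s3)
      (fun x _ => df x) (fun x _ => dg x)

/-- Kato's inequality `Δ|q| ≥ sign q · Δq`, tested against `φ ≥ 0` and for the second derivative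
in a single direction `e`. Only derivatives along `e` enter. -/
lemma kato_direction {N : ℕ} {q q1 q2 φ φ1 φ2 : Euc N → ℝ} {e : Euc N}
    (hq : Continuous q) (hq1 : Continuous q1) (hq2 : Continuous q2)
    (hφ : Continuous φ) (hφ1 : Continuous φ1) (hφ2 : Continuous φ2)
    (sφ : HasCompactSupport φ) (sφ1 : HasCompactSupport φ1) (sφ2 : HasCompactSupport φ2)
    (dq : ∀ x, HasLineDerivAt ℝ q (q1 x) x e) (dq1 : ∀ x, HasLineDerivAt ℝ q1 (q2 x) x e)
    (dφ : ∀ x, HasLineDerivAt ℝ φ (φ1 x) x e) (dφ1 : ∀ x, HasLineDerivAt ℝ φ1 (φ2 x) x e)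
    (hφ0 : ∀ x, 0 ≤ φ x) :
    ∫ x, q x / |q x| * q2 x * φ x ≤ ∫ x, |q x| * φ2 x := by
  have key : ∀ ε : ℝ, 0 < ε →
      ∫ x, q x / √(q x ^ 2 + ε ^ 2) * q2 x * φ x ≤ ∫ x, √(q x ^ 2 + ε ^ 2) * φ2 x := by
    intro ε hε
    have hpos : ∀ x, √(q x ^ 2 + ε ^ 2) ≠ 0 := fun x => by positivity
    have c0 : Continuous (fun x => √(q x ^ 2 + ε ^ 2)) := by fun_prop
    have c1 : Continuous (fun x => q x / √(q x ^ 2 + ε ^ 2)) := hq.div c0 hpos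
    have c2 : Continuous (fun x => ε ^ 2 / √(q x ^ 2 + ε ^ 2) ^ 3) :=
      continuous_const.div (c0.pow 3) (fun x => pow_ne_zero _ (hpos x))
    have d0 : ∀ x, HasLineDerivAt ℝ (fun x => √(q x ^ 2 + ε ^ 2))
        (q x / √(q x ^ 2 + ε ^ 2) * q1 x) x e := by
      intro x
      have := HasDerivAt.comp (0 : ℝ) (h₂ := fun s => √(s ^ 2 + ε ^ 2))
        (h := fun t : ℝ => q (x + t • e)) (hasDerivAt_regAbs hε _) (dq x)
      simpa [HasLineDerivAt, Function.comp_def] using this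
    have d1 : ∀ x, HasLineDerivAt ℝ (fun x => q x / √(q x ^ 2 + ε ^ 2))
        (ε ^ 2 / √(q x ^ 2 + ε ^ 2) ^ 3 * q1 x) x e := by
      intro x
      have := HasDerivAt.comp (0 : ℝ) (h₂ := fun s => s / √(s ^ 2 + ε ^ 2))
        (h := fun t : ℝ => q (x + t • e)) (hasDerivAt_regSign hε _) (dq x)
      simpa [HasLineDerivAt, Function.comp_def] using this
    have d2 : ∀ x, HasLineDerivAt ℝ (fun x => q x / √(q x ^ 2 + ε ^ 2) * φ x)
        (ε ^ 2 / √(q x ^ 2 + ε ^ 2) ^ 3 * q1 x * φ x + q x / √(q x ^ 2 + ε ^ 2) * φ1 x) x e := by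
      intro x
      have := HasDerivAt.mul (d1 x) (dφ x)
      simpa [HasLineDerivAt, Pi.mul_def] using this
    have s4 : HasCompactSupport (fun x => ε ^ 2 / √(q x ^ 2 + ε ^ 2) ^ 3 * q1 x * φ x
        + q x / √(q x ^ 2 + ε ^ 2) * φ1 x) := by
      have h1 : HasCompactSupport (fun x => ε ^ 2 / √(q x ^ 2 + ε ^ 2) ^ 3 * q1 x * φ x) :=
        sφ.mul_left
      have h2 : HasCompactSupport (fun x => q x / √(q x ^ 2 + ε ^ 2) * φ1 x) := sφ1.mul_left
      exact h1.add h2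
    have c4 : Continuous (fun x => ε ^ 2 / √(q x ^ 2 + ε ^ 2) ^ 3 * q1 x * φ x
        + q x / √(q x ^ 2 + ε ^ 2) * φ1 x) := ((c2.mul hq1).mul hφ).add (c1.mul hφ1)
    have A := integral_mul_lineDeriv_eq_neg (c1.mul hφ) c4 hq1 hq2
      (Or.inl ⟨sφ.mul_left, s4⟩) d2 dq1
    have B := integral_mul_lineDeriv_eq_neg c0 (c1.mul hq1) hφ1 hφ2
      (Or.inr ⟨sφ1, sφ2⟩) d0 dφ1
    calc ∫ x, q x / √(q x ^ 2 + ε ^ 2) * q2 x * φ x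
        = ∫ x, q x / √(q x ^ 2 + ε ^ 2) * φ x * q2 x := by
          congr 1; ext x; ring
      _ = -∫ x, (ε ^ 2 / √(q x ^ 2 + ε ^ 2) ^ 3 * q1 x * φ x
            + q x / √(q x ^ 2 + ε ^ 2) * φ1 x) * q1 x := A
      -- convexity of the regularized absolute value: the term with `q1 ^ 2` has a sign
      _ ≤ -∫ x, q x / √(q x ^ 2 + ε ^ 2) * q1 x * φ1 x := by
          refine neg_le_neg (integral_mono
            (((c1.mul hq1).mul hφ1).integrable_of_hasCompactSupport sφ1.mul_left)
            ((c4.mul hq1).integrable_of_hasCompactSupport s4.mul_right) fun x => ?_)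
          have : 0 ≤ ε ^ 2 / √(q x ^ 2 + ε ^ 2) ^ 3 * (q1 x) ^ 2 * φ x := by
            have := hφ0 x
            positivity
          simp only
          nlinarith [this]
      _ = ∫ x, √(q x ^ 2 + ε ^ 2) * φ2 x := B.symm
  have l1 : Tendsto (fun ε : ℝ => ∫ x, q x / √(q x ^ 2 + ε ^ 2) * q2 x * φ x) (𝓝[>] 0)
      (𝓝 (∫ x, q x / |q x| * q2 x * φ x)) := by
    refine tendsto_integral_filter_of_dominated_convergence (fun x => |q2 x * φ x|) ?_ ?_ ?_ ?_
    · filter_upwards [self_mem_nhdsWithin] with ε hε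
      have hpos : ∀ x, √(q x ^ 2 + ε ^ 2) ≠ 0 := fun x => by
        have : (0:ℝ) < ε := hε
        positivity
      have : Continuous (fun x => q x / √(q x ^ 2 + ε ^ 2)) := hq.div (by fun_prop) hpos
      exact (by fun_prop : Continuous _).aestronglyMeasurable
    · refine Eventually.of_forall fun ε => Eventually.of_forall fun x => ?_
      rw [Real.norm_eq_abs, mul_assoc, abs_mul]
      exact mul_le_of_le_one_left (abs_nonneg _) (abs_regSign_le _ _)
    · exact ((hq2.mul hφ).integrable_of_hasCompactSupport sφ.mul_left).abs
    · exact Eventually.of_forall fun x => ((tendsto_regSign _).mul_const _).mul_const _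
  have l2 : Tendsto (fun ε : ℝ => ∫ x, √(q x ^ 2 + ε ^ 2) * φ2 x) (𝓝[>] 0)
      (𝓝 (∫ x, |q x| * φ2 x)) := by
    refine tendsto_integral_filter_of_dominated_convergence
      (fun x => (|q x| + 1) * |φ2 x|) ?_ ?_ ?_ ?_
    · exact Eventually.of_forall fun ε => (by fun_prop : Continuous _).aestronglyMeasurable
    · filter_upwards [Ioo_mem_nhdsGT (zero_lt_one' ℝ)] with ε hε
      refine Eventually.of_forall fun x => ?_
      rw [Real.norm_eq_abs, abs_mul, abs_of_nonneg (Real.sqrt_nonneg _)]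
      exact mul_le_mul_of_nonneg_right (regAbs_le hε.1 hε.2 _) (abs_nonneg _)
    · have : HasCompactSupport fun x => |φ2 x| := sφ2.norm
      exact (by fun_prop : Continuous _).integrable_of_hasCompactSupport this.mul_left
    · exact Eventually.of_forall fun x => (tendsto_regAbs _).mul_const _
  refine le_of_tendsto_of_tendsto l1 l2 ?_
  filter_upwards [self_mem_nhdsWithin] with ε hε
  exact key ε hε

/-! ### The radial cutoff weight -/

lemma hasDerivAt_posPart_pow (n : ℕ) (y : ℝ) :
    HasDerivAt (fun y : ℝ => max y 0 ^ (n + 2)) ((n + 2 : ℕ) * max y 0 ^ (n + 1)) y := by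
  rcases lt_trichotomy y 0 with h | rfl | h
  · rw [max_eq_right h.le]
    refine HasDerivAt.congr_of_eventuallyEq (f := fun _ => (0:ℝ)) ?_ ?_
    · simpa using hasDerivAt_const y (0:ℝ)
    · filter_upwards [Iio_mem_nhds h] with z hz
      rw [max_eq_right (le_of_lt hz)]; simp
  · have : HasFDerivAt (fun y : ℝ => max y 0 ^ (n + 2)) (0 : ℝ →L[ℝ] ℝ) 0 := by
      refine Asymptotics.IsBigO.hasFDerivAt (n := n + 2) ?_ (by omega)
      refine Asymptotics.IsBigO.of_bound 1 (Eventually.of_forall fun z => ?_)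
      rw [norm_pow, norm_pow, norm_norm, one_mul, sub_zero]
      refine pow_le_pow_left₀ (norm_nonneg _) ?_ _
      rw [Real.norm_eq_abs, Real.norm_eq_abs, abs_of_nonneg (le_max_right _ _)]
      exact max_le (le_abs_self z) (abs_nonneg z)
    simpa using this.hasDerivAt
  · rw [max_eq_left h.le]
    refine HasDerivAt.congr_of_eventuallyEq (f := fun z => z ^ (n + 2)) ?_ ?_
    · simpa using hasDerivAt_pow (n + 2) y
    · filter_upwards [Ioi_mem_nhds h] with z hz
      rw [max_eq_left (le_of_lt hz)]

/-- The linear cutoff in the variable `s = ‖x‖ ^ 2`, vanishing for `s ≥ R`. -/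
def lin (R s : ℝ) : ℝ := max (1 - s / R) 0

lemma lin_nonneg (R s : ℝ) : 0 ≤ lin R s := le_max_right _ _

lemma lin_le_one {R s : ℝ} (hR : 0 < R) (hs : 0 ≤ s) : lin R s ≤ 1 :=
  max_le (by have : 0 ≤ s / R := by positivity
             linarith) zero_le_one

lemma lin_eq_zero {R s : ℝ} (hR : 0 < R) (hs : R ≤ s) : lin R s = 0 :=
  max_eq_right (by rw [sub_nonpos, le_div_iff₀ hR]; linarith)

lemma continuous_lin (R : ℝ) : Continuous (lin R) := by unfold lin; fun_prop

lemma hasDerivAt_lin_pow (n : ℕ) (R s : ℝ) :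
    HasDerivAt (fun s => lin R s ^ (n + 2)) (-((n + 2 : ℕ) / R) * lin R s ^ (n + 1)) s := by
  have h : HasDerivAt (fun s : ℝ => 1 - s / R) (-(1 / R)) s :=
    ((hasDerivAt_id' s).div_const R).const_sub 1
  refine ((hasDerivAt_posPart_pow n (1 - s / R)).comp s h).congr_deriv ?_
  unfold lin; ring

lemma hasDerivAt_weight {k s : ℝ} (p : ℝ) (h : 0 < k + s) :
    HasDerivAt (fun s => (k + s) ^ p) (p * (k + s) ^ (p - 1)) s := by
  have h1 : HasDerivAt (fun s : ℝ => k + s) 1 s := (hasDerivAt_id' s).const_add k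
  exact (h1.rpow_const (Or.inl h.ne')).congr_deriv (by ring)

/-- Radial profile, in the variable `s = ‖x‖ ^ 2`, of the test function: the weight
`(k + s) ^ (-δ)` times a `C²` cutoff. -/
def prof (k δ R s : ℝ) : ℝ := (k + s) ^ (-δ) * lin R s ^ 3

/-- First derivative of `prof`. -/
def prof1 (k δ R s : ℝ) : ℝ :=
  -δ * (k + s) ^ (-δ - 1) * lin R s ^ 3 + (k + s) ^ (-δ) * (-(3 / R) * lin R s ^ 2)

/-- Second derivative of `prof`. -/
def prof2 (k δ R s : ℝ) : ℝ :=
  -δ * ((-δ - 1) * (k + s) ^ (-δ - 2)) * lin R s ^ 3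
    + 2 * (-δ * (k + s) ^ (-δ - 1) * (-(3 / R) * lin R s ^ 2))
    + (k + s) ^ (-δ) * (6 / R ^ 2 * lin R s)

lemma hasDerivAt_prof {k δ R s : ℝ} (h : 0 < k + s) :
    HasDerivAt (prof k δ R) (prof1 k δ R s) s := by
  refine ((hasDerivAt_weight (-δ) h).mul (hasDerivAt_lin_pow 1 R s)).congr_deriv ?_
  unfold prof1; norm_num

lemma hasDerivAt_prof1 {k δ R s : ℝ} (h : 0 < k + s) :
    HasDerivAt (prof1 k δ R) (prof2 k δ R s) s := by
  have h2 := (hasDerivAt_lin_pow 0 R s).const_mul (-(3 / R))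
  refine ((((hasDerivAt_weight (-δ - 1) h).const_mul (-δ)).mul (hasDerivAt_lin_pow 1 R s)).add
    ((hasDerivAt_weight (-δ) h).mul h2)).congr_deriv ?_
  unfold prof2
  rw [show -δ - 1 - 1 = -δ - 2 by ring]
  norm_num
  ring

/-- The Laplacian `4 s ψ'' + 2 N ψ'` of the radial test function is bounded above by the weight
divided by `R`: the uncut weight is superharmonic because `2 (δ + 1) ≤ N`, and only the cutoff
contributes positively. -/
lemma radial_lapl_le {N k δ R s : ℝ} (hk : 0 < k) (hδ : 0 < δ) (hδN : 2 * (δ + 1) ≤ N)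
    (hR : 0 < R) (hs : 0 ≤ s) (hsR : s ≤ R) :
    4 * s * prof2 k δ R s + 2 * N * prof1 k δ R s
      ≤ (24 * δ + 24) / R * (k + s) ^ (-δ) := by
  have hc : 0 < k + s := by linarith
  have e1 : (k + s) ^ (-δ - 1) = (k + s) ^ (-δ) / (k + s) := Real.rpow_sub_one hc.ne' _
  have e2 : (k + s) ^ (-δ - 2) = (k + s) ^ (-δ) / (k + s) / (k + s) := by
    rw [show -δ - 2 = -δ - 1 - 1 by ring, Real.rpow_sub_one hc.ne', e1]
  have hg : 0 < (k + s) ^ (-δ) := by positivity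
  have hP0 := lin_nonneg R s
  have hP1 := lin_le_one hR hs
  unfold prof2 prof1
  rw [e1, e2]
  set P := lin R s
  set g := (k + s) ^ (-δ)
  set a := s / (k + s) with ha
  have ha0 : 0 ≤ a := by positivity
  have ha1 : a ≤ 1 := div_le_one_of_le₀ (by linarith) hc.le
  have hb1 : s / R ≤ 1 := div_le_one_of_le₀ hsR hR.le
  have hb0 : 0 ≤ s / R := by positivity
  have hN : 0 ≤ N := by linarith
  have : 4 * s * (-δ * ((-δ - 1) * (g / (k + s) / (k + s))) * P ^ 3
      + 2 * (-δ * (g / (k + s)) * (-(3 / R) * P ^ 2)) + g * (6 / R ^ 2 * P))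
      + 2 * N * (-δ * (g / (k + s)) * P ^ 3 + g * (-(3 / R) * P ^ 2))
      = g / (k + s) * δ * P ^ 3 * (4 * (δ + 1) * a - 2 * N)
        + 24 * δ * (g / R) * (a * P ^ 2) + 24 * (g / R) * ((s / R) * P)
        - 6 * N * (g / R) * P ^ 2 := by
    rw [ha]; field_simp; ring
  rw [this]
  have hgR : 0 < g / R := by positivity
  have t1 : g / (k + s) * δ * P ^ 3 * (4 * (δ + 1) * a - 2 * N) ≤ 0 :=
    mul_nonpos_of_nonneg_of_nonpos (by positivity) (by nlinarith)
  have t2 : a * P ^ 2 ≤ 1 := mul_le_one₀ ha1 (by positivity) (pow_le_one₀ hP0 hP1)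
  have t3 : (s / R) * P ≤ 1 := mul_le_one₀ hb1 hP0 hP1
  have t4 : 0 ≤ 6 * N * (g / R) * P ^ 2 := by positivity
  have t5 := mul_le_mul_of_nonneg_left t2 (by positivity : 0 ≤ 24 * δ * (g / R))
  have t6 := mul_le_mul_of_nonneg_left t3 (by positivity : 0 ≤ 24 * (g / R))
  calc _ ≤ 24 * δ * (g / R) + 24 * (g / R) := by linarith
    _ = _ := by ring

/-- The radial test function. -/
def tst {N : ℕ} (k δ R : ℝ) (x : Euc N) : ℝ := prof k δ R (‖x‖ ^ 2)

/-- The derivative of `tst` in the direction `e`. -/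
def tst1 {N : ℕ} (k δ R : ℝ) (e x : Euc N) : ℝ := prof1 k δ R (‖x‖ ^ 2) * (2 * ⟪x, e⟫)

/-- The second derivative of `tst` in the direction `e`. -/
def tst2 {N : ℕ} (k δ R : ℝ) (e x : Euc N) : ℝ :=
  prof2 k δ R (‖x‖ ^ 2) * (2 * ⟪x, e⟫) ^ 2 + prof1 k δ R (‖x‖ ^ 2) * (2 * ‖e‖ ^ 2)

section tst
variable {N : ℕ} {k δ R : ℝ}

lemma hasDerivAt_norm_sq_line (x e : Euc N) :
    HasDerivAt (fun t : ℝ => ‖x + t • e‖ ^ 2) (2 * ⟪x, e⟫) 0 := by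
  have h : HasDerivAt (fun t : ℝ => x + t • e) e 0 := by
    simpa using ((hasDerivAt_id' (0:ℝ)).smul_const e).const_add x
  simpa using h.norm_sq

lemma hasLineDerivAt_comp_norm_sq {f : ℝ → ℝ} {f' : ℝ} (x e : Euc N)
    (h : HasDerivAt f f' (‖x‖ ^ 2)) :
    HasLineDerivAt ℝ (fun x : Euc N => f (‖x‖ ^ 2)) (f' * (2 * ⟪x, e⟫)) x e :=
  HasDerivAt.comp (0:ℝ) (h₂ := f) (h := fun t : ℝ => ‖x + t • e‖ ^ 2) (by simpa using h)
    (hasDerivAt_norm_sq_line x e)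

lemma hasLineDerivAt_tst (hk : 0 < k) (x e : Euc N) :
    HasLineDerivAt ℝ (tst k δ R) (tst1 k δ R e x) x e :=
  hasLineDerivAt_comp_norm_sq x e (hasDerivAt_prof (by positivity))

lemma hasLineDerivAt_tst1 (hk : 0 < k) (x e : Euc N) :
    HasLineDerivAt ℝ (tst1 k δ R e) (tst2 k δ R e x) x e := by
  have h1 := hasLineDerivAt_comp_norm_sq x e
    (hasDerivAt_prof1 (k := k) (δ := δ) (R := R) (s := ‖x‖ ^ 2) (by positivity))
  have h2 : HasLineDerivAt ℝ (fun x : Euc N => 2 * ⟪x, e⟫) (2 * ‖e‖ ^ 2) x e := by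
    have h : HasDerivAt (fun t : ℝ => x + t • e) e 0 := by
      simpa using ((hasDerivAt_id' (0:ℝ)).smul_const e).const_add x
    have := (h.inner ℝ (hasDerivAt_const (0:ℝ) e)).const_mul 2
    simpa [HasLineDerivAt] using this
  have h3 := HasDerivAt.mul h1 h2
  refine HasDerivAt.congr_deriv h3 ?_
  simp only [zero_smul, add_zero]
  unfold tst2; ring

lemma continuous_weight (hk : 0 < k) (p : ℝ) :
    Continuous (fun x : Euc N => (k + ‖x‖ ^ 2) ^ p) :=
  (by fun_prop : Continuous fun x : Euc N => k + ‖x‖ ^ 2).rpow_const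
    fun x => Or.inl (by positivity)

lemma continuous_lin_norm : Continuous (fun x : Euc N => lin R (‖x‖ ^ 2)) :=
  (continuous_lin R).comp (by fun_prop)

lemma continuous_tst (hk : 0 < k) : Continuous (tst (N := N) k δ R) := by
  have h1 := continuous_weight (N := N) hk (-δ)
  have h4 := continuous_lin_norm (N := N) (R := R)
  unfold tst prof; fun_prop

lemma continuous_prof1 (hk : 0 < k) : Continuous (fun x : Euc N => prof1 k δ R (‖x‖ ^ 2)) := by
  have h1 := continuous_weight (N := N) hk (-δ)
  have h2 := continuous_weight (N := N) hk (-δ - 1)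
  have h4 := continuous_lin_norm (N := N) (R := R)
  unfold prof1; fun_prop

lemma continuous_prof2 (hk : 0 < k) : Continuous (fun x : Euc N => prof2 k δ R (‖x‖ ^ 2)) := by
  have h1 := continuous_weight (N := N) hk (-δ)
  have h2 := continuous_weight (N := N) hk (-δ - 1)
  have h3 := continuous_weight (N := N) hk (-δ - 2)
  have h4 := continuous_lin_norm (N := N) (R := R)
  unfold prof2; fun_prop

lemma continuous_tst1 (hk : 0 < k) (e : Euc N) : Continuous (tst1 k δ R e) := by
  have := continuous_prof1 (N := N) (δ := δ) (R := R) hk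
  unfold tst1; fun_prop

lemma continuous_tst2 (hk : 0 < k) (e : Euc N) : Continuous (tst2 k δ R e) := by
  have := continuous_prof1 (N := N) (δ := δ) (R := R) hk
  have := continuous_prof2 (N := N) (δ := δ) (R := R) hk
  unfold tst2; fun_prop

lemma le_sq_norm_of_notMem_closedBall {x : Euc N}
    (hx : x ∉ Metric.closedBall (0 : Euc N) (√R)) : R ≤ ‖x‖ ^ 2 := by
  rw [mem_closedBall_zero_iff, not_le] at hx
  exact (Real.sqrt_le_left (norm_nonneg x)).1 hx.le

lemma tst_eq_zero (hR : 0 < R) {x : Euc N} (hx : R ≤ ‖x‖ ^ 2) : tst k δ R x = 0 := by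
  simp [tst, prof, lin_eq_zero hR hx]

lemma tst1_eq_zero (hR : 0 < R) (e : Euc N) {x : Euc N} (hx : R ≤ ‖x‖ ^ 2) :
    tst1 k δ R e x = 0 := by
  simp [tst1, prof1, lin_eq_zero hR hx]

lemma tst2_eq_zero (hR : 0 < R) (e : Euc N) {x : Euc N} (hx : R ≤ ‖x‖ ^ 2) :
    tst2 k δ R e x = 0 := by
  simp [tst2, prof1, prof2, lin_eq_zero hR hx]

lemma hasCompactSupport_of_eq_zero {f : Euc N → ℝ}
    (h : ∀ x, R ≤ ‖x‖ ^ 2 → f x = 0) : HasCompactSupport f :=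
  HasCompactSupport.intro (isCompact_closedBall (0 : Euc N) (√R))
    fun x hx => h x (le_sq_norm_of_notMem_closedBall hx)

lemma tst_nonneg (hk : 0 < k) (x : Euc N) : 0 ≤ tst k δ R x := by
  have := lin_nonneg R (‖x‖ ^ 2)
  unfold tst prof; positivity

lemma tst_le (hk : 0 < k) (hR : 0 < R) (x : Euc N) : tst k δ R x ≤ (k + ‖x‖ ^ 2) ^ (-δ) :=
  mul_le_of_le_one_right (by positivity)
    (pow_le_one₀ (lin_nonneg _ _) (lin_le_one hR (by positivity)))

lemma sum_tst2 (x : Euc N) :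
    ∑ i, tst2 k δ R (EuclideanSpace.single i 1) x
      = 4 * ‖x‖ ^ 2 * prof2 k δ R (‖x‖ ^ 2) + 2 * N * prof1 k δ R (‖x‖ ^ 2) := by
  have h : ‖x‖ ^ 2 = ∑ i, x i ^ 2 := EuclideanSpace.real_norm_sq_eq x
  unfold tst2
  rw [Finset.sum_add_distrib]
  congr 1
  · generalize prof2 k δ R (‖x‖ ^ 2) = c
    rw [h, Finset.mul_sum, Finset.sum_mul]
    refine Finset.sum_congr rfl fun i _ => ?_
    simp [EuclideanSpace.inner_single_right]
    ring
  · simp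
    ring

end tst

/-- In dimension `N`, the integral of `‖x‖ ^ (2 - N)` over the ball of radius `√R` is a constant
multiple of `R`. Replacing `‖x‖ ^ 2` by `κ + ‖x‖ ^ 2` removes the singularity at `0` and only
decreases the integrand. -/
lemma integral_critical_le {N : ℕ} (hN : 2 < N) {κ R : ℝ} (hκ : 0 < κ) (hR : 0 < R) :
    ∫ x in Metric.closedBall (0 : Euc N) (√R), (κ + ‖x‖ ^ 2) ^ (-(((N : ℝ) - 2) / 2))
      ≤ N * volume.real (Metric.ball (0 : Euc N) 1) * (R / 2) := by
  have hN' : Nontrivial (Euc N) := by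
    have : Nonempty (Fin N) := ⟨⟨0, by omega⟩⟩
    infer_instance
  have h := integral_fun_norm_addHaar (volume : Measure (Euc N))
    ((Set.Iic (√R)).indicator fun r => (κ + r ^ 2) ^ (-(((N : ℝ) - 2) / 2)))
  have h1 : ∫ x in Metric.closedBall (0 : Euc N) (√R), (κ + ‖x‖ ^ 2) ^ (-(((N : ℝ) - 2) / 2))
      = ∫ x : Euc N, (Set.Iic (√R)).indicator
        (fun r => (κ + r ^ 2) ^ (-(((N : ℝ) - 2) / 2))) ‖x‖ := by
    rw [← integral_indicator Metric.isClosed_closedBall.measurableSet]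
    congr 1; ext x
    simp [Set.indicator, Metric.mem_closedBall]
  rw [h1, h, finrank_euclideanSpace_fin, nsmul_eq_mul, smul_eq_mul, mul_assoc]
  refine mul_le_mul_of_nonneg_left (mul_le_mul_of_nonneg_left ?_ measureReal_nonneg) (by positivity)
  have hI : ∫ y in Set.Ioc 0 (√R), y = R / 2 := by
    rw [← intervalIntegral.integral_of_le (Real.sqrt_nonneg R), integral_id,
      Real.sq_sqrt hR.le]; ring
  rw [← hI]
  have h2 : ∀ y : ℝ, y ^ (N - 1) • (Set.Iic (√R)).indicator
      (fun r => (κ + r ^ 2) ^ (-(((N : ℝ) - 2) / 2))) y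
      = (Set.Iic (√R)).indicator
        (fun r => r ^ (N - 1) * (κ + r ^ 2) ^ (-(((N : ℝ) - 2) / 2))) y := by
    intro y; by_cases hy : y ∈ Set.Iic (√R) <;> simp [Set.indicator, hy]
  simp_rw [h2]
  rw [setIntegral_indicator measurableSet_Iic, Set.Ioi_inter_Iic]
  have hc : Continuous fun r : ℝ => r ^ (N - 1) * (κ + r ^ 2) ^ (-(((N : ℝ) - 2) / 2)) :=
    (continuous_pow _).mul ((by fun_prop : Continuous fun r : ℝ => κ + r ^ 2).rpow_const
      fun x => Or.inl (by positivity))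
  refine setIntegral_mono_on (hc.continuousOn.integrableOn_Icc.mono_set Set.Ioc_subset_Icc_self)
    (continuous_id.continuousOn.integrableOn_Icc.mono_set Set.Ioc_subset_Icc_self)
    measurableSet_Ioc fun r hr => ?_
  have hr0 : 0 < r := hr.1
  have e : r ^ (N - 1) = r * (r ^ 2) ^ (((N : ℝ) - 2) / 2) := by
    rw [← Real.rpow_natCast r 2, ← Real.rpow_mul hr0.le]
    have : ((2 : ℕ) : ℝ) * (((N : ℝ) - 2) / 2) = ((N - 2 : ℕ) : ℝ) := by
      rw [Nat.cast_sub hN.le]; push_cast; ring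
    rw [this, Real.rpow_natCast, ← pow_succ']
    congr 1; omega
  have hN2 : 0 ≤ ((N : ℝ) - 2) / 2 := by
    have : (2 : ℝ) < N := by exact_mod_cast hN
    linarith
  rw [e, Real.rpow_neg (by positivity), mul_assoc, ← div_eq_mul_inv]
  exact mul_le_of_le_one_right hr0.le (div_le_one_of_le₀
    (Real.rpow_le_rpow (by positivity) (by linarith) hN2) (by positivity))

/-- Against a function whose decay is critical for the weight (`b + δ = (N - 2) / 2`), the
Laplacian of the test function has integral bounded above independently of `R`: the factor `1 / R`
from `radial_lapl_le` cancels the factor `R` from `integral_critical_le`. -/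
lemma integral_abs_mul_lapl_tst_le {N : ℕ} (hN : 2 < N) {k δ R κ K b : ℝ} (hk : 0 < k)
    (hδ : 0 < δ) (hδN : 2 * (δ + 1) ≤ N) (hR : 0 < R) (hκ : 0 < κ) (hK : 0 ≤ K) (hb : 0 ≤ b)
    (hbδ : b + δ = ((N : ℝ) - 2) / 2) {q : Euc N → ℝ} (hq : Continuous q)
    (hqb : ∀ x, |q x| ≤ K * (κ + ‖x‖ ^ 2) ^ (-b)) :
    ∫ x, |q x| * ∑ i, tst2 k δ R (EuclideanSpace.single i 1) x
      ≤ K * (24 * δ + 24) * (N * volume.real (Metric.ball (0 : Euc N) 1) / 2) := by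
  set μ := min κ k with hμ
  have hμ0 : 0 < μ := lt_min hκ hk
  have hz : ∀ x ∉ Metric.closedBall (0 : Euc N) (√R),
      |q x| * ∑ i, tst2 k δ R (EuclideanSpace.single i 1) x = 0 := by
    intro x hx
    have := le_sq_norm_of_notMem_closedBall hx
    rw [Finset.sum_eq_zero fun i _ => tst2_eq_zero hR _ this, mul_zero]
  rw [← setIntegral_eq_integral_of_forall_compl_eq_zero hz]
  have hc : Continuous fun x => |q x| * ∑ i, tst2 k δ R (EuclideanSpace.single i 1) x :=
    hq.abs.mul (continuous_finsetSum _ fun i _ => continuous_tst2 hk _)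
  have hw := continuous_weight (N := N) hμ0 (-(((N : ℝ) - 2) / 2))
  have hcomp := isCompact_closedBall (0 : Euc N) (√R)
  calc ∫ x in Metric.closedBall (0 : Euc N) (√R),
        |q x| * ∑ i, tst2 k δ R (EuclideanSpace.single i 1) x
      ≤ ∫ x in Metric.closedBall (0 : Euc N) (√R),
        K * ((24 * δ + 24) / R) * (μ + ‖x‖ ^ 2) ^ (-(((N : ℝ) - 2) / 2)) := by
        refine setIntegral_mono_on (hc.continuousOn.integrableOn_compact hcomp)
          ((continuous_const.mul hw).continuousOn.integrableOn_compact hcomp)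
          hcomp.measurableSet fun x hx => ?_
        have hxR : ‖x‖ ^ 2 ≤ R := by
          rw [mem_closedBall_zero_iff] at hx
          exact (Real.le_sqrt (norm_nonneg _) hR.le).1 hx
        have h1 := radial_lapl_le (N := N) hk hδ hδN hR (by positivity) hxR
        rw [← sum_tst2] at h1
        have h2 : (k + ‖x‖ ^ 2) ^ (-δ) ≤ (μ + ‖x‖ ^ 2) ^ (-δ) :=
          Real.rpow_le_rpow_of_nonpos (by positivity)
            (by have := min_le_right κ k; linarith) (by linarith)
        have h3 : (κ + ‖x‖ ^ 2) ^ (-b) ≤ (μ + ‖x‖ ^ 2) ^ (-b) :=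
          Real.rpow_le_rpow_of_nonpos (by positivity)
            (by have := min_le_left κ k; linarith) (by linarith)
        calc |q x| * ∑ i, tst2 k δ R (EuclideanSpace.single i 1) x
            ≤ |q x| * ((24 * δ + 24) / R * (k + ‖x‖ ^ 2) ^ (-δ)) :=
              mul_le_mul_of_nonneg_left h1 (abs_nonneg _)
          _ ≤ (K * (μ + ‖x‖ ^ 2) ^ (-b)) * ((24 * δ + 24) / R * (μ + ‖x‖ ^ 2) ^ (-δ)) := by
              refine mul_le_mul ((hqb x).trans (mul_le_mul_of_nonneg_left h3 hK))
                (mul_le_mul_of_nonneg_left h2 (by positivity)) (by positivity) (by positivity)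
          _ = K * ((24 * δ + 24) / R) * ((μ + ‖x‖ ^ 2) ^ (-b) * (μ + ‖x‖ ^ 2) ^ (-δ)) := by ring
          _ = _ := by
              rw [← Real.rpow_add (by positivity)]
              congr 2; linarith
    _ ≤ K * ((24 * δ + 24) / R) * (N * volume.real (Metric.ball (0 : Euc N) 1) * (R / 2)) := by
        rw [integral_const_mul]
        exact mul_le_mul_of_nonneg_left (integral_critical_le hN hμ0 hR) (by positivity)
    _ = _ := by field_simp

/-! ### Growth of the weighted `L¹` norm -/

lemma hasLineDerivAt_of_contDiff {N : ℕ} {q : Euc N → ℝ} (hq : ContDiff ℝ 2 q) (e x : Euc N) :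
    HasLineDerivAt ℝ q (fderiv ℝ q x e) x e :=
  ((hq.differentiable (by norm_num)) x).hasFDerivAt.hasLineDerivAt e

lemma continuous_fderiv_fderiv {N : ℕ} {q : Euc N → ℝ} (hq : ContDiff ℝ 2 q) (e : Euc N) :
    Continuous (fun x => fderiv ℝ (fderiv ℝ q) x e e) := by
  have h1 : ContDiff ℝ 1 (fderiv ℝ q) := hq.fderiv_right (m := 1) (by norm_num)
  have h2 : Continuous (fderiv ℝ (fderiv ℝ q)) := h1.continuous_fderiv (by norm_num)
  fun_prop

lemma hasLineDerivAt_fderiv {N : ℕ} {q : Euc N → ℝ} (hq : ContDiff ℝ 2 q) (e x : Euc N) :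
    HasLineDerivAt ℝ (fun y => fderiv ℝ q y e) (fderiv ℝ (fderiv ℝ q) x e e) x e := by
  have h1 : ContDiff ℝ 1 (fderiv ℝ q) := hq.fderiv_right (m := 1) (by norm_num)
  have h2 : HasFDerivAt (fderiv ℝ q) (fderiv ℝ (fderiv ℝ q) x) x :=
    ((h1.differentiable (by norm_num)) x).hasFDerivAt
  have h3 := h2.clm_apply (hasFDerivAt_const e x)
  simpa using h3.hasLineDerivAt e

lemma lapl_eq {N : ℕ} (q : Euc N → ℝ) (x : Euc N) :
    lapl q x = ∑ i, fderiv ℝ (fderiv ℝ q) x (EuclideanSpace.single i 1)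
      (EuclideanSpace.single i 1) := by
  simp [lapl, iteratedFDeriv_two_apply]

lemma abs_div_abs_le_one (s : ℝ) : |(s / |s|)| ≤ 1 := by
  rw [abs_div, abs_abs]; exact div_self_le_one _

lemma integrable_sign_mul {N : ℕ} {q f : Euc N → ℝ} (hq : Continuous q) (hf : Continuous f)
    (sf : HasCompactSupport f) : Integrable (fun x => q x / |q x| * f x) :=
  (hf.integrable_of_hasCompactSupport sf).bdd_mul (c := 1)
    (hq.measurable.div hq.abs.measurable).aestronglyMeasurable
    (Eventually.of_forall fun _ => abs_div_abs_le_one _)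

/-- Kato's inequality tested against the radial cutoff weight. -/
lemma kato_lapl {N : ℕ} {k δ R : ℝ} (hk : 0 < k) (hR : 0 < R) {q : Euc N → ℝ}
    (hq : ContDiff ℝ 2 q) :
    ∫ x, q x / |q x| * (lapl q x * tst k δ R x)
      ≤ ∫ x, |q x| * ∑ i, tst2 k δ R (EuclideanSpace.single i 1) x := by
  have hqc := hq.continuous
  have sφ : HasCompactSupport (tst (N := N) k δ R) :=
    hasCompactSupport_of_eq_zero fun x => tst_eq_zero hR
  have s1 : ∀ e, HasCompactSupport (tst1 (N := N) k δ R e) := fun e =>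
    hasCompactSupport_of_eq_zero fun x => tst1_eq_zero hR e
  have s2 : ∀ e, HasCompactSupport (tst2 (N := N) k δ R e) := fun e =>
    hasCompactSupport_of_eq_zero fun x => tst2_eq_zero hR e
  simp_rw [lapl_eq, Finset.sum_mul, Finset.mul_sum]
  rw [integral_finsetSum, integral_finsetSum]
  · refine Finset.sum_le_sum fun i _ => ?_
    simp_rw [← mul_assoc]
    exact kato_direction hqc ((hq.continuous_fderiv (by norm_num)).clm_apply continuous_const)
      (continuous_fderiv_fderiv hq _) (continuous_tst hk)
      (continuous_tst1 hk _) (continuous_tst2 hk _) sφ (s1 _) (s2 _)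
      (hasLineDerivAt_of_contDiff hq _) (hasLineDerivAt_fderiv hq _)
      (fun x => hasLineDerivAt_tst hk x _) (fun x => hasLineDerivAt_tst1 hk x _)
      (fun x => tst_nonneg hk x)
  · intro i _
    exact (hqc.abs.mul (continuous_tst2 hk _)).integrable_of_hasCompactSupport (s2 _).mul_left
  · intro i _
    exact integrable_sign_mul hqc ((continuous_fderiv_fderiv hq _).mul (continuous_tst hk))
      sφ.mul_left

/-- If `∂ₜ p = Δ q` where `p` and `q` have the same sign, then the weighted `L¹` norm of `p`
against the cutoff weight grows at most linearly in time, at a rate that bounds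
`∫ |q| Δφ`. -/
lemma integral_abs_tst_sub_le {N : ℕ} {k δ R a b M : ℝ} (hk : 0 < k) (hR : 0 < R) (hab : a ≤ b)
    {p pt q : Euc N → ℝ → ℝ}
    (hp : ContinuousOn (fun z : Euc N × ℝ => p z.1 z.2) (Set.univ ×ˢ Set.Icc a b))
    (hpt : ContinuousOn (fun z : Euc N × ℝ => pt z.1 z.2) (Set.univ ×ˢ Set.Icc a b))
    (hder : ∀ x, ∀ t ∈ Set.Icc a b, HasDerivAt (p x) (pt x t) t)
    (hq : ∀ t ∈ Set.Icc a b, ContDiff ℝ 2 fun x => q x t)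
    (hpde : ∀ x, ∀ t ∈ Set.Icc a b, pt x t = lapl (fun y => q y t) x)
    (hsign : ∀ x, ∀ t ∈ Set.Icc a b, p x t / |p x t| = q x t / |q x t|)
    (hM : ∀ t ∈ Set.Icc a b,
      ∫ x, |q x t| * ∑ i, tst2 k δ R (EuclideanSpace.single i 1) x ≤ M) :
    ∫ x, |p x b| * tst k δ R x ≤ (∫ x, |p x a| * tst k δ R x) + M * (b - a) := by
  have sφ : HasCompactSupport (tst (N := N) k δ R) :=
    hasCompactSupport_of_eq_zero fun x => tst_eq_zero hR
  have hφ := continuous_tst (N := N) (δ := δ) (R := R) hk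
  have hslice : ∀ t ∈ Set.Icc a b, Continuous fun x => p x t := fun t ht =>
    continuousOn_univ.1 (hp.comp (by fun_prop : Continuous fun x : Euc N => (x, t)).continuousOn
      fun x _ => ⟨trivial, ht⟩)
  have hInt : ∀ t ∈ Set.Icc a b, Integrable fun x => |p x t| * tst k δ R x := fun t ht =>
    ((hslice t ht).abs.mul hφ).integrable_of_hasCompactSupport sφ.mul_left
  set B := Metric.closedBall (0 : Euc N) (√R) with hB
  have hBc : IsCompact B := isCompact_closedBall _ _
  have hzero : ∀ x ∉ B, tst k δ R x = 0 := fun x hx =>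
    tst_eq_zero hR (le_sq_norm_of_notMem_closedBall hx)
  let F : Euc N → ℝ → ℝ := fun x t => p x t / |p x t| * (pt x t * tst k δ R x)
  have hFint : Integrable (Function.uncurry F)
      ((volume.restrict B).prod (volume.restrict (Set.Ioc a b))) := by
    rw [Measure.prod_restrict]
    have hsub : B ×ˢ Set.Icc a b ⊆ Set.univ ×ˢ Set.Icc a b :=
      Set.prod_mono (Set.subset_univ _) le_rfl
    have hsub2 : B ×ˢ Set.Ioc a b ⊆ B ×ˢ Set.Icc a b :=
      Set.prod_mono le_rfl Set.Ioc_subset_Icc_self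
    have h1 : IntegrableOn (fun z : Euc N × ℝ => pt z.1 z.2 * tst k δ R z.1) (B ×ˢ Set.Ioc a b)
        (volume.prod volume) := by
      refine IntegrableOn.mono_set ?_ hsub2
      refine ContinuousOn.integrableOn_compact (hBc.prod isCompact_Icc) ?_
      exact (hpt.mono hsub).mul (hφ.comp continuous_fst).continuousOn
    have h2 : AEMeasurable (fun z : Euc N × ℝ => p z.1 z.2)
        ((volume.prod volume).restrict (B ×ˢ Set.Ioc a b)) :=
      (hp.mono (hsub2.trans hsub)).aemeasurable (hBc.measurableSet.prod measurableSet_Ioc)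
    exact Integrable.bdd_mul (c := 1) h1
      (h2.div (continuous_abs.measurable.comp_aemeasurable h2)).aestronglyMeasurable
      (Eventually.of_forall fun _ => abs_div_abs_le_one _)
  have hpoint : ∀ x, |p x b| * tst k δ R x - |p x a| * tst k δ R x
      = ∫ t in Set.Ioc a b, F x t := by
    intro x
    have hc : ContinuousOn (pt x) (Set.Icc a b) :=
      hpt.comp (by fun_prop : Continuous fun t : ℝ => (x, t)).continuousOn
        fun t ht => ⟨trivial, ht⟩
    rw [← sub_mul, abs_sub_abs_eq_integral hab (hder x) hc,
      intervalIntegral.integral_of_le hab, ← integral_mul_const]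
    simp only [F, mul_assoc]
  have hrate : ∀ t ∈ Set.Icc a b, ∫ x in B, F x t ≤ M := by
    intro t ht
    rw [setIntegral_eq_integral_of_forall_compl_eq_zero
      fun x hx => by simp only [F]; rw [hzero x hx]; ring]
    refine le_trans (le_of_eq ?_) ((kato_lapl hk hR (hq t ht)).trans (hM t ht))
    refine integral_congr_ae (Eventually.of_forall fun x => ?_)
    simp only [F]
    rw [hsign x t ht, hpde x t ht]
  have : (∫ x, |p x b| * tst k δ R x) - ∫ x, |p x a| * tst k δ R x ≤ M * (b - a) := by
    rw [← integral_sub (hInt b (Set.right_mem_Icc.2 hab)) (hInt a (Set.left_mem_Icc.2 hab))]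
    calc ∫ x, (|p x b| * tst k δ R x - |p x a| * tst k δ R x)
        = ∫ x in B, (|p x b| * tst k δ R x - |p x a| * tst k δ R x) := by
          rw [setIntegral_eq_integral_of_forall_compl_eq_zero]
          intro x hx; rw [hzero x hx]; ring
      _ = ∫ x in B, ∫ t in Set.Ioc a b, F x t := by simp_rw [hpoint]
      _ = ∫ t in Set.Ioc a b, ∫ x in B, F x t := integral_integral_swap hFint
      _ ≤ ∫ t in Set.Ioc a b, M :=
          setIntegral_mono_on hFint.integral_prod_right (integrable_const _)
            measurableSet_Ioc fun t ht => hrate t (Set.Ioc_subset_Icc_self ht)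
      _ = M * (b - a) := by
          rw [setIntegral_const, smul_eq_mul, Real.volume_real_Ioc_of_le hab, mul_comm]
  linarith

/-! ### Differences of trapped solutions -/

section Sol
variable {N : ℕ} {m T : ℝ} {u v : Euc N → ℝ → ℝ} {u₀ v₀ : Euc N → ℝ}

lemma IsFDESol.contDiffAt (hu : IsFDESol N m T u u₀) (x : Euc N) {t : ℝ}
    (ht : t ∈ Set.Ioo 0 T) : ContDiffAt ℝ (⊤ : ℕ∞) (fun p : Euc N × ℝ => u p.1 p.2) (x, t) :=
  hu.2.1.contDiffAt ((isOpen_univ.prod isOpen_Ioo).mem_nhds ⟨trivial, ht⟩)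

lemma IsFDESol.contDiff_pow (hu : IsFDESol N m T u u₀) {t : ℝ} (ht : t ∈ Set.Ioo 0 T) :
    ContDiff ℝ 2 fun x => u x t ^ m := by
  have h : ContDiff ℝ 2 fun x => u x t := by
    rw [contDiff_iff_contDiffAt]
    intro x
    exact ((hu.contDiffAt x ht).of_le (m := 2) (by norm_cast)).comp x
      (by fun_prop : ContDiffAt ℝ 2 (fun x : Euc N => (x, t)) x)
  exact h.rpow_const_of_ne fun x => (hu.1 x t ht).ne'

lemma IsFDESol.hasDerivAt (hu : IsFDESol N m T u u₀) (x : Euc N) {t : ℝ}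
    (ht : t ∈ Set.Ioo 0 T) :
    HasDerivAt (u x) (fderiv ℝ (fun p : Euc N × ℝ => u p.1 p.2) (x, t) (0, 1)) t := by
  have h1 := ((hu.contDiffAt x ht).differentiableAt (by simp)).hasFDerivAt
  have h2 : HasDerivAt (fun s : ℝ => (x, s)) ((0, 1) : Euc N × ℝ) t :=
    (hasDerivAt_const t x).prodMk (hasDerivAt_id' t)
  exact h1.comp_hasDerivAt t h2

lemma IsFDESol.continuousOn_deriv (hu : IsFDESol N m T u u₀) :
    ContinuousOn (fun p : Euc N × ℝ => deriv (u p.1) p.2) (Set.univ ×ˢ Set.Ioo 0 T) := by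
  have h := hu.2.1.continuousOn_fderiv_of_isOpen (isOpen_univ.prod isOpen_Ioo)
    (by exact_mod_cast le_top)
  refine (h.clm_apply (continuousOn_const (c := ((0, 1) : Euc N × ℝ)))).congr fun p hp => ?_
  exact (hu.hasDerivAt p.1 hp.2).deriv

lemma lapl_sub {f g : Euc N → ℝ} (hf : ContDiff ℝ 2 f) (hg : ContDiff ℝ 2 g) (x : Euc N) :
    lapl (fun y => f y - g y) x = lapl f x - lapl g x := by
  unfold lapl
  rw [← Finset.sum_sub_distrib]
  refine Finset.sum_congr rfl fun i _ => ?_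
  have : (fun y => f y - g y) = f - g := rfl
  rw [this, iteratedFDeriv_sub_apply (i := 2) hf.contDiffAt hg.contDiffAt]
  rfl

end Sol

/-- The differences `a - b` and `a ^ m - b ^ m` have the same sign, because `m > 0`. -/
lemma sign_rpow_sub {m a b : ℝ} (hm : 0 < m) (ha : 0 < a) (hb : 0 < b) :
    (a - b) / |a - b| = (a ^ m - b ^ m) / |a ^ m - b ^ m| := by
  rcases lt_trichotomy a b with h | rfl | h
  · have h2 := Real.rpow_lt_rpow ha.le h hm
    rw [abs_of_neg (sub_neg.2 h), abs_of_neg (sub_neg.2 h2), div_neg, div_neg,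
      div_self (sub_neg.2 h).ne, div_self (sub_neg.2 h2).ne]
  · simp
  · have h2 := Real.rpow_lt_rpow hb.le h hm
    rw [abs_of_pos (sub_pos.2 h), abs_of_pos (sub_pos.2 h2),
      div_self (sub_pos.2 h).ne', div_self (ne_of_gt (sub_pos.2 h2))]

/-- The tangent line bound for the convex function `y ↦ y ^ (-a)`. -/
lemma rpow_neg_sub_le {a y z : ℝ} (ha : 0 < a) (hy : 0 < y) (hyz : y ≤ z) :
    y ^ (-a) - z ^ (-a) ≤ a * (z - y) * y ^ (-(a + 1)) := by
  have hz : 0 < z := by linarith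
  have h1 : 1 - a * (z / y - 1) ≤ (z / y) ^ (-a) := by
    rw [Real.rpow_def_of_pos (by positivity)]
    have h2 := Real.log_le_sub_one_of_pos (show 0 < z / y by positivity)
    have h3 := Real.add_one_le_exp (Real.log (z / y) * -a)
    nlinarith
  have h4 : z ^ (-a) = y ^ (-a) * (z / y) ^ (-a) := by
    rw [← Real.mul_rpow hy.le (by positivity)]
    congr 1; field_simp
  have h5 : y ^ (-(a + 1)) = y ^ (-a) / y := by
    rw [neg_add', Real.rpow_sub_one hy.ne']
  rw [h4, h5]
  have h6 := mul_le_mul_of_nonneg_left h1 (show 0 ≤ y ^ (-a) by positivity)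
  have h7 : a * (z - y) * (y ^ (-a) / y) = y ^ (-a) * (a * (z / y - 1)) := by
    field_simp
  rw [h7]; nlinarith

/-- The `m`-th powers of two values trapped between two Barenblatt solutions differ by
`O(|x| ^ (-2 / (1 - m)))`, one power of `|x| ^ 2` better than each of them, uniformly up to any
time `t₁ < T`. -/
lemma abs_pow_sub_le {N : ℕ} {m T k₁ k₂ t t₁ : ℝ} (hm0 : 0 < m) (hm1 : m < 1)
    (hC : 0 < Cst N m) (hγ : gammaC N m ≤ 0) (hk2 : 0 < k₂) (hk12 : k₂ < k₁)
    (ht0 : 0 ≤ t) (htt : t ≤ t₁) (ht1 : t₁ < T) {x : Euc N} {a b : ℝ}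
    (ha : Bb N m T k₁ x t ≤ a ∧ a ≤ Bb N m T k₂ x t)
    (hb : Bb N m T k₁ x t ≤ b ∧ b ≤ Bb N m T k₂ x t) :
    |a ^ m - b ^ m| ≤ (Cst N m * T) ^ (m / (1 - m)) *
      (m / (1 - m) * ((k₁ - k₂) * (T - t₁) ^ (2 * gammaC N m))) *
      (k₂ * T ^ (2 * gammaC N m) + ‖x‖ ^ 2) ^ (-(1 / (1 - m))) := by
  have h1m : 0 < 1 - m := by linarith
  have hTt : 0 < T - t := by linarith
  have hT : 0 < T := by linarith
  set σ := (T - t) ^ (2 * gammaC N m) with hσ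
  have hσ0 : 0 < σ := by positivity
  have hα : 0 < m / (1 - m) := by positivity
  have hBpow : ∀ k, 0 < k → Bb N m T k x t ^ m
      = (Cst N m * (T - t)) ^ (m / (1 - m)) * (k * σ + ‖x‖ ^ 2) ^ (-(m / (1 - m))) := by
    intro k hk
    unfold Bb
    rw [← Real.rpow_mul (by positivity), one_div_mul_eq_div, Real.div_rpow (by positivity)
      (by positivity), Real.rpow_neg (by positivity), div_eq_mul_inv]
  have hB0 : 0 ≤ Bb N m T k₁ x t := by
    have hk1 : 0 < k₁ := by linarith
    unfold Bb; positivity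
  have hd : ∀ a b : ℝ, Bb N m T k₁ x t ≤ a → a ≤ Bb N m T k₂ x t →
      Bb N m T k₁ x t ≤ b → a ^ m - b ^ m ≤ Bb N m T k₂ x t ^ m - Bb N m T k₁ x t ^ m := by
    intro a b h1 h2 h3
    exact sub_le_sub (Real.rpow_le_rpow (hB0.trans h1) h2 hm0.le)
      (Real.rpow_le_rpow hB0 h3 hm0.le)
  have hmain : |a ^ m - b ^ m| ≤ Bb N m T k₂ x t ^ m - Bb N m T k₁ x t ^ m := by
    rw [abs_le']
    refine ⟨hd a b ha.1 ha.2 hb.1, ?_⟩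
    rw [neg_sub]
    exact hd b a hb.1 hb.2 ha.1
  have hexp : m / (1 - m) + 1 = 1 / (1 - m) := by field_simp; ring
  have hy : 0 < k₂ * σ + ‖x‖ ^ 2 := by positivity
  have hconv := rpow_neg_sub_le hα hy
    (show k₂ * σ + ‖x‖ ^ 2 ≤ k₁ * σ + ‖x‖ ^ 2 by nlinarith)
  rw [hexp] at hconv
  have hσT : T ^ (2 * gammaC N m) ≤ σ :=
    Real.rpow_le_rpow_of_nonpos hTt (by linarith) (by linarith)
  have hσ1 : σ ≤ (T - t₁) ^ (2 * gammaC N m) :=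
    Real.rpow_le_rpow_of_nonpos (by linarith) (by linarith) (by linarith)
  have hCT : (Cst N m * (T - t)) ^ (m / (1 - m)) ≤ (Cst N m * T) ^ (m / (1 - m)) :=
    Real.rpow_le_rpow (by positivity) (by nlinarith) hα.le
  have hw : (k₂ * σ + ‖x‖ ^ 2) ^ (-(1 / (1 - m)))
      ≤ (k₂ * T ^ (2 * gammaC N m) + ‖x‖ ^ 2) ^ (-(1 / (1 - m))) :=
    Real.rpow_le_rpow_of_nonpos (by positivity) (by nlinarith)
      (by rw [neg_nonpos]; positivity)
  have hkk : 0 < k₁ - k₂ := by linarith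
  calc |a ^ m - b ^ m| ≤ Bb N m T k₂ x t ^ m - Bb N m T k₁ x t ^ m := hmain
    _ = (Cst N m * (T - t)) ^ (m / (1 - m)) * ((k₂ * σ + ‖x‖ ^ 2) ^ (-(m / (1 - m)))
          - (k₁ * σ + ‖x‖ ^ 2) ^ (-(m / (1 - m)))) := by
        rw [hBpow k₂ hk2, hBpow k₁ (by linarith)]; ring
    _ ≤ (Cst N m * (T - t)) ^ (m / (1 - m)) * (m / (1 - m) * ((k₁ - k₂) * σ)
          * (k₂ * σ + ‖x‖ ^ 2) ^ (-(1 / (1 - m)))) := by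
        refine mul_le_mul_of_nonneg_left (hconv.trans (le_of_eq ?_)) (by positivity)
        ring
    _ ≤ (Cst N m * T) ^ (m / (1 - m)) * (m / (1 - m) * ((k₁ - k₂) * (T - t₁) ^ (2 * gammaC N m))
          * (k₂ * T ^ (2 * gammaC N m) + ‖x‖ ^ 2) ^ (-(1 / (1 - m)))) := by
        gcongr
    _ = _ := by ring

/-- Finiteness of the weighted `L¹` norm is invariant under dilations. -/
lemma lintegral_weight_dilate {N : ℕ} {k δ A l : ℝ} (hk : 0 < k) (hδ : 0 < δ) (hA : 0 < A)
    (hl : 0 < l) {p : Euc N → ℝ}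
    (h : (∫⁻ x, ENNReal.ofReal (|p x| * (k + ‖x‖ ^ 2) ^ (-δ))) < ⊤) :
    (∫⁻ x, ENNReal.ofReal (|A * p (l • x)| * (k + ‖x‖ ^ 2) ^ (-δ))) < ⊤ := by
  -- `D` compares the weights at `x` and at `l • x`
  set D := max 1 (l ^ 2) with hD
  have hD1 : 1 ≤ D := le_max_left _ _
  have hDl : l ^ 2 ≤ D := le_max_right _ _
  have hD0 : 0 < D := by linarith
  have hpt : ∀ x : Euc N, ENNReal.ofReal (|A * p (l • x)| * (k + ‖x‖ ^ 2) ^ (-δ))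
      ≤ ENNReal.ofReal (A * D ^ δ) *
        ENNReal.ofReal (|p (l • x)| * (k + ‖l • x‖ ^ 2) ^ (-δ)) := by
    intro x
    rw [← ENNReal.ofReal_mul (by positivity)]
    refine ENNReal.ofReal_le_ofReal ?_
    have h1 : (k + ‖x‖ ^ 2) ^ (-δ) ≤ D ^ δ * (k + ‖l • x‖ ^ 2) ^ (-δ) := by
      have h2 : k + ‖l • x‖ ^ 2 ≤ D * (k + ‖x‖ ^ 2) := by
        rw [norm_smul, mul_pow, Real.norm_eq_abs, sq_abs]
        nlinarith [sq_nonneg ‖x‖, mul_le_mul_of_nonneg_right hDl (sq_nonneg ‖x‖)]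
      have h3 := Real.rpow_le_rpow_of_nonpos (by positivity) h2 (by linarith : -δ ≤ 0)
      rw [Real.mul_rpow hD0.le (by positivity)] at h3
      have h4 : D ^ δ * D ^ (-δ) = 1 := by
        rw [← Real.rpow_add hD0]; simp
      calc (k + ‖x‖ ^ 2) ^ (-δ) = D ^ δ * (D ^ (-δ) * (k + ‖x‖ ^ 2) ^ (-δ)) := by
            rw [← mul_assoc, h4, one_mul]
        _ ≤ _ := mul_le_mul_of_nonneg_left h3 (by positivity)
    calc |A * p (l • x)| * (k + ‖x‖ ^ 2) ^ (-δ)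
        = A * |p (l • x)| * (k + ‖x‖ ^ 2) ^ (-δ) := by rw [abs_mul, abs_of_pos hA]
      _ ≤ A * |p (l • x)| * (D ^ δ * (k + ‖l • x‖ ^ 2) ^ (-δ)) :=
          mul_le_mul_of_nonneg_left h1 (by positivity)
      _ = _ := by ring
  refine (lintegral_mono hpt).trans_lt ?_
  rw [lintegral_const_mul' _ _ ENNReal.ofReal_ne_top]
  refine ENNReal.mul_lt_top ENNReal.ofReal_lt_top ?_
  have hemb : MeasurableEmbedding (fun x : Euc N => l • x) :=
    (Homeomorph.smulOfNeZero l hl.ne').measurableEmbedding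
  rw [← hemb.lintegral_map (μ := volume)
    (fun y => ENNReal.ofReal (|p y| * (k + ‖y‖ ^ 2) ^ (-δ)))]
  have hmap := Measure.map_addHaar_smul (volume : Measure (Euc N)) hl.ne'
  rw [hmap, lintegral_smul_measure]
  exact ENNReal.mul_lt_top ENNReal.ofReal_lt_top h

lemma tendsto_tst {N : ℕ} {k δ : ℝ} (x : Euc N) :
    Tendsto (fun n : ℕ => tst k δ ((n : ℝ) + 1) x) atTop (𝓝 ((k + ‖x‖ ^ 2) ^ (-δ))) := by
  have h1 : Tendsto (fun n : ℕ => ‖x‖ ^ 2 / ((n : ℝ) + 1)) atTop (𝓝 0) :=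
    Tendsto.const_div_atTop (tendsto_natCast_atTop_atTop.atTop_add tendsto_const_nhds) _
  have h2 : Tendsto (fun n : ℕ => lin ((n : ℝ) + 1) (‖x‖ ^ 2)) atTop (𝓝 1) := by
    have := (h1.const_sub 1).max (tendsto_const_nhds (x := (0:ℝ)))
    simpa [lin] using this
  simpa [tst, prof] using (h2.pow 3).const_mul ((k + ‖x‖ ^ 2) ^ (-δ))

/-- Propagation in the original variables: finiteness of the weighted `L¹` distance at time `0`
gives finiteness at every later time. -/
lemma weighted_propagation {N : ℕ} {m T k δ t K κ b : ℝ} (hN : 2 < N) (hm : 0 < m)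
    (ht0 : 0 < t) (htT : t < T) (hk : 0 < k) (hδ : 0 < δ) (hδN : 2 * (δ + 1) ≤ N)
    (hκ : 0 < κ) (hK : 0 ≤ K) (hb : 0 ≤ b) (hbδ : b + δ = ((N : ℝ) - 2) / 2)
    {u v : Euc N → ℝ → ℝ} {u₀ v₀ : Euc N → ℝ}
    (hu : IsFDESol N m T u u₀) (hv : IsFDESol N m T v v₀)
    (hqb : ∀ s ∈ Set.Ioc 0 t, ∀ x, |u x s ^ m - v x s ^ m| ≤ K * (κ + ‖x‖ ^ 2) ^ (-b))
    (h0 : (∫⁻ x, ENNReal.ofReal (|u x 0 - v x 0| * (k + ‖x‖ ^ 2) ^ (-δ))) < ⊤) :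
    (∫⁻ x, ENNReal.ofReal (|u x t - v x t| * (k + ‖x‖ ^ 2) ^ (-δ))) < ⊤ := by
  set G := ∫⁻ x, ENNReal.ofReal (|u x 0 - v x 0| * (k + ‖x‖ ^ 2) ^ (-δ)) with hG
  set M := K * (24 * δ + 24) * (N * volume.real (Metric.ball (0 : Euc N) 1) / 2) with hMdef
  have hcont : ContinuousOn (fun z : Euc N × ℝ => u z.1 z.2 - v z.1 z.2)
      (Set.univ ×ˢ Set.Ico 0 T) := hu.2.2.1.sub hv.2.2.1
  have hslice : ∀ s ∈ Set.Ico 0 T, Continuous fun x => u x s - v x s := fun s hs =>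
    continuousOn_univ.1 (hcont.comp
      (by fun_prop : Continuous fun x : Euc N => (x, s)).continuousOn fun x _ => ⟨trivial, hs⟩)
  have sφ : ∀ R : ℝ, 0 < R → HasCompactSupport (tst (N := N) k δ R) := fun R hR =>
    hasCompactSupport_of_eq_zero fun x => tst_eq_zero hR
  have hInt : ∀ R : ℝ, 0 < R → ∀ s ∈ Set.Ico 0 T,
      Integrable fun x => |u x s - v x s| * tst k δ R x := fun R hR s hs =>
    ((hslice s hs).abs.mul (continuous_tst hk)).integrable_of_hasCompactSupport
      (sφ R hR).mul_left
  have hlin : ∀ R : ℝ, 0 < R → ∀ s ∈ Set.Ico 0 T,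
      ENNReal.ofReal (∫ x, |u x s - v x s| * tst k δ R x)
        = ∫⁻ x, ENNReal.ofReal (|u x s - v x s| * tst k δ R x) := fun R hR s hs =>
    ofReal_integral_eq_lintegral_ofReal (hInt R hR s hs)
      (Eventually.of_forall fun x => mul_nonneg (abs_nonneg _) (tst_nonneg hk x))
  -- the estimate between two interior times
  have hstep : ∀ R : ℝ, 0 < R → ∀ s ∈ Set.Ioo 0 t,
      ∫ x, |u x t - v x t| * tst k δ R x
        ≤ (∫ x, |u x s - v x s| * tst k δ R x) + M * (t - s) := by
    intro R hR s hs
    have hsub : Set.Icc s t ⊆ Set.Ioo 0 T := fun r hr => ⟨hs.1.trans_le hr.1, hr.2.trans_lt htT⟩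
    have hsubI : Set.Icc s t ⊆ Set.Ico 0 T := hsub.trans Set.Ioo_subset_Ico_self
    refine integral_abs_tst_sub_le (p := fun x r => u x r - v x r)
      (pt := fun x r => deriv (u x) r - deriv (v x) r)
      (q := fun x r => u x r ^ m - v x r ^ m) hk hR hs.2.le
      (hcont.mono (Set.prod_mono le_rfl hsubI))
      ((hu.continuousOn_deriv.sub hv.continuousOn_deriv).mono (Set.prod_mono le_rfl hsub))
      ?_ ?_ ?_ ?_ ?_
    · intro x r hr
      exact (hu.hasDerivAt x (hsub hr)).differentiableAt.hasDerivAt.sub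
        (hv.hasDerivAt x (hsub hr)).differentiableAt.hasDerivAt
    · intro r hr
      exact (hu.contDiff_pow (hsub hr)).sub (hv.contDiff_pow (hsub hr))
    · intro x r hr
      rw [lapl_sub (hu.contDiff_pow (hsub hr)) (hv.contDiff_pow (hsub hr)),
        ← hu.2.2.2.2 x r (hsub hr), ← hv.2.2.2.2 x r (hsub hr)]
    · intro x r hr
      exact sign_rpow_sub hm (hu.1 x r (hsub hr)) (hv.1 x r (hsub hr))
    · intro r hr
      exact integral_abs_mul_lapl_tst_le hN hk hδ hδN hR hκ hK hb hbδ
        ((hu.contDiff_pow (hsub hr)).sub (hv.contDiff_pow (hsub hr))).continuous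
        (hqb r ⟨hs.1.trans_le hr.1, hr.2⟩)
  have hzero : ∀ R : ℝ, 0 < R →
      ∫ x, |u x t - v x t| * tst k δ R x
        ≤ (∫ x, |u x 0 - v x 0| * tst k δ R x) + M * t := by
    intro R hR
    have hc : ContinuousOn (fun s => ∫ x, |u x s - v x s| * tst k δ R x) (Set.Ico 0 T) := by
      refine continuousOn_integral_of_compact_support
        (isCompact_closedBall (0 : Euc N) (√R)) ?_ ?_
      · have h1 : ContinuousOn (fun z : ℝ × Euc N => u z.2 z.1 - v z.2 z.1)
            (Set.Ico 0 T ×ˢ Set.univ) :=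
          hcont.comp continuous_swap.continuousOn fun z hz => ⟨trivial, hz.1⟩
        exact h1.abs.mul ((continuous_tst hk).comp continuous_snd).continuousOn
      · intro s x _ hx
        rw [tst_eq_zero hR (le_sq_norm_of_notMem_closedBall hx), mul_zero]
    have hc0 := hc 0 ⟨le_rfl, ht0.trans htT⟩
    have hlim : Tendsto (fun s => (∫ x, |u x s - v x s| * tst k δ R x) + M * (t - s))
        (𝓝[>] 0) (𝓝 ((∫ x, |u x 0 - v x 0| * tst k δ R x) + M * (t - 0))) := by
      refine Tendsto.add (hc0.tendsto.mono_left ?_) ?_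
      · rw [← nhdsWithin_Ioo_eq_nhdsGT (ht0.trans htT)]
        exact nhdsWithin_mono _ Set.Ioo_subset_Ico_self
      · exact ((by fun_prop : Continuous fun s : ℝ => M * (t - s)).tendsto 0).mono_left
          nhdsWithin_le_nhds
    rw [sub_zero] at hlim
    refine ge_of_tendsto hlim ?_
    filter_upwards [Ioo_mem_nhdsGT ht0] with s hs
    exact hstep R hR s hs
  have hbound : ∀ R : ℝ, 0 < R →
      ∫⁻ x, ENNReal.ofReal (|u x t - v x t| * tst k δ R x) ≤ G + ENNReal.ofReal (M * t) := by
    intro R hR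
    rw [← hlin R hR t ⟨ht0.le, htT⟩]
    refine (ENNReal.ofReal_le_ofReal (hzero R hR)).trans (ENNReal.ofReal_add_le.trans ?_)
    rw [hlin R hR 0 ⟨le_rfl, ht0.trans htT⟩]
    refine add_le_add_left (lintegral_mono fun x => ENNReal.ofReal_le_ofReal ?_) _
    exact mul_le_mul_of_nonneg_left (tst_le hk hR x) (abs_nonneg _)
  -- the cutoff is removed by Fatou's lemma
  have hfatou : ∫⁻ x, ENNReal.ofReal (|u x t - v x t| * (k + ‖x‖ ^ 2) ^ (-δ))
      ≤ G + ENNReal.ofReal (M * t) := by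
    have hl : ∀ x, ENNReal.ofReal (|u x t - v x t| * (k + ‖x‖ ^ 2) ^ (-δ))
        = liminf (fun n : ℕ => ENNReal.ofReal (|u x t - v x t| * tst k δ ((n : ℝ) + 1) x))
          atTop := fun x =>
      ((ENNReal.continuous_ofReal.tendsto _).comp
        ((tendsto_tst x).const_mul |u x t - v x t|)).liminf_eq.symm
    simp_rw [hl]
    refine (lintegral_liminf_le fun n => ?_).trans ?_
    · exact (ENNReal.continuous_ofReal.comp
        ((hslice t ⟨ht0.le, htT⟩).abs.mul (continuous_tst hk))).measurable
    · refine (liminf_le_liminf (v := fun _ => G + ENNReal.ofReal (M * t))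
        (Eventually.of_forall fun n => hbound _ (by positivity))).trans ?_
      rw [liminf_const]
  exact hfatou.trans_lt (ENNReal.add_lt_top.2 ⟨h0, ENNReal.ofReal_lt_top⟩)

/-! ### Rescaling -/

/-- Rescaling turns the weighted difference in the rescaled variables into a dilate of the
difference in the original variables, up to the constant `Cst N m ^ δ` coming from the weight. -/
lemma rescale_integrand {N : ℕ} {m T k δ : ℝ} (h1m : 0 < 1 - m) (hC : 0 < Cst N m) (hk : 0 < k)
    (u v : Euc N → ℝ → ℝ) (x : Euc N) (τ : ℝ) :
    |rescaleSol N m T u x τ - rescaleSol N m T v x τ| * BbTil N m k x ^ (δ * (1 - m))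
      = |(Real.exp (betaC N m * τ) * Cst N m ^ δ) *
          (u (Real.exp (-gammaC N m * τ) • x) (T - Real.exp (-τ))
            - v (Real.exp (-gammaC N m * τ) • x) (T - Real.exp (-τ)))| *
          (k + ‖x‖ ^ 2) ^ (-δ) := by
  have hy : 0 < k + ‖x‖ ^ 2 := by positivity
  have hw : BbTil N m k x ^ (δ * (1 - m)) = Cst N m ^ δ * (k + ‖x‖ ^ 2) ^ (-δ) := by
    unfold BbTil
    rw [← Real.rpow_mul (by positivity), show 1 / (1 - m) * (δ * (1 - m)) = δ by field_simp,
      Real.div_rpow hC.le hy.le, Real.rpow_neg hy.le, div_eq_mul_inv]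
  rw [hw]
  unfold rescaleSol
  rw [← mul_sub, abs_mul, abs_mul, abs_mul, abs_of_pos (Real.rpow_pos_of_pos hC δ)]
  ring

/-! ### The weighted bound -/

/-- Weighted L¹ bound: with weight B̃^α, α = (N-2)(1-m)/2 - 1, if the
rescaled initial difference is in L¹(B̃^α) then so is the rescaled difference at every
later time τ, with a bound ∫ |ũ(τ) - ṽ(τ)| B̃^α ≤ ∫ |ũ₀ - ṽ₀| B̃^α + C(τ). -/
theorem weighted_L1_bound (N : ℕ) (hN : 4 < N) (m T k₁ k₂ : ℝ)
    (hm0 : 0 < m) (hm1 : m < ((N : ℝ) - 4) / ((N : ℝ) - 2))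
    (hT : 0 < T) (hk2 : 0 < k₂) (hk12 : k₂ < k₁)
    (u v : Euc N → ℝ → ℝ) (u₀ v₀ : Euc N → ℝ)
    (hu : IsFDESol N m T u u₀) (hv : IsFDESol N m T v v₀)
    (htrap0u : ∀ x : Euc N,
      (Cst N m * T / (k₁ + ‖x‖ ^ 2)) ^ (1 / (1 - m)) ≤ u₀ x ∧
        u₀ x ≤ (Cst N m * T / (k₂ + ‖x‖ ^ 2)) ^ (1 / (1 - m)))
    (htrap0v : ∀ x : Euc N,
      (Cst N m * T / (k₁ + ‖x‖ ^ 2)) ^ (1 / (1 - m)) ≤ v₀ x ∧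
        v₀ x ≤ (Cst N m * T / (k₂ + ‖x‖ ^ 2)) ^ (1 / (1 - m)))
    (htrapu : ∀ x : Euc N, ∀ t ∈ Set.Ioo (0:ℝ) T,
      Bb N m T k₁ x t ≤ u x t ∧ u x t ≤ Bb N m T k₂ x t)
    (htrapv : ∀ x : Euc N, ∀ t ∈ Set.Ioo (0:ℝ) T,
      Bb N m T k₁ x t ≤ v x t ∧ v x t ≤ Bb N m T k₂ x t)
    (hwint : (∫⁻ x, ENNReal.ofReal
        (|rescaleSol N m T u x (-Real.log T) - rescaleSol N m T v x (-Real.log T)|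
          * BbTil N m k₂ x ^ (((N : ℝ) - 2) * (1 - m) / 2 - 1))) < ⊤) :
    ∀ τ : ℝ, -Real.log T ≤ τ →
      (∫⁻ x, ENNReal.ofReal (|rescaleSol N m T u x τ - rescaleSol N m T v x τ|
          * BbTil N m k₂ x ^ (((N : ℝ) - 2) * (1 - m) / 2 - 1))) < ⊤ ∧
      ∃ C : ℝ,
        (∫⁻ x, ENNReal.ofReal (|rescaleSol N m T u x τ - rescaleSol N m T v x τ|
            * BbTil N m k₂ x ^ (((N : ℝ) - 2) * (1 - m) / 2 - 1)))
          ≤ (∫⁻ x, ENNReal.ofReal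
              (|rescaleSol N m T u x (-Real.log T) - rescaleSol N m T v x (-Real.log T)|
                * BbTil N m k₂ x ^ (((N : ℝ) - 2) * (1 - m) / 2 - 1)))
            + ENNReal.ofReal C := by
  have hN4 : (4 : ℝ) < N := by exact_mod_cast hN
  have hmN : m * ((N : ℝ) - 2) < N - 4 := (lt_div_iff₀ (by linarith)).1 hm1
  have hm1' : m < 1 := hm1.trans ((div_lt_one (by linarith)).2 (by linarith))
  have h1m : 0 < 1 - m := by linarith
  have hpos : 0 < (N : ℝ) - 2 - m * N := by nlinarith
  have hC : 0 < Cst N m := by unfold Cst; positivity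
  have hβ : 0 < betaC N m := by
    unfold betaC; rw [mul_comm (N : ℝ) m]; positivity
  have hγ : gammaC N m ≤ 0 := by
    unfold gammaC
    exact div_nonpos_of_nonpos_of_nonneg (by linarith) (by linarith)
  obtain ⟨δ, hδα⟩ : ∃ δ, δ * (1 - m) = ((N : ℝ) - 2) * (1 - m) / 2 - 1 :=
    ⟨_, div_mul_cancel₀ _ h1m.ne'⟩
  have hδ : 0 < δ := by
    refine pos_of_mul_pos_left ?_ h1m.le
    rw [hδα]; nlinarith
  have hbδ : 1 / (1 - m) + δ = ((N : ℝ) - 2) / 2 := by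
    field_simp; linarith
  have hδN : 2 * (δ + 1) ≤ N := by
    have : 0 < 1 / (1 - m) := by positivity
    linarith
  rw [← hδα] at hwint ⊢
  simp_rw [rescale_integrand h1m hC hk2] at hwint
  rw [neg_neg, Real.exp_log hT, sub_self] at hwint
  -- the initial hypothesis in the original variables
  have h0 : (∫⁻ x, ENNReal.ofReal (|u x 0 - v x 0| * (k₂ + ‖x‖ ^ 2) ^ (-δ))) < ⊤ := by
    have hA : 0 < Real.exp (betaC N m * -Real.log T) * Cst N m ^ δ := by positivity
    have hl := Real.exp_pos (-gammaC N m * -Real.log T)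
    have h := lintegral_weight_dilate hk2 hδ (inv_pos.2 hA) (inv_pos.2 hl)
      (p := fun x => (Real.exp (betaC N m * -Real.log T) * Cst N m ^ δ) *
        (u (Real.exp (-gammaC N m * -Real.log T) • x) 0
          - v (Real.exp (-gammaC N m * -Real.log T) • x) 0)) hwint
    simpa only [smul_smul, mul_inv_cancel₀ hl.ne', one_smul, inv_mul_cancel_left₀ hA.ne']
      using h
  intro τ hτ
  suffices hfin : (∫⁻ x, ENNReal.ofReal (|rescaleSol N m T u x τ - rescaleSol N m T v x τ|
      * BbTil N m k₂ x ^ (δ * (1 - m)))) < ⊤ by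
    refine ⟨hfin, _, le_add_left (ENNReal.ofReal_toReal hfin.ne).ge⟩
  simp_rw [rescale_integrand h1m hC hk2]
  refine lintegral_weight_dilate (p := fun x => u x (T - Real.exp (-τ)) - v x (T - Real.exp (-τ)))
    hk2 hδ (by positivity) (Real.exp_pos _) ?_
  have hexp : Real.exp (-τ) ≤ T := (Real.le_log_iff_exp_le hT).1 (by linarith)
  rcases hexp.eq_or_lt with he | he
  · rwa [he, sub_self]
  have ht0 : 0 < T - Real.exp (-τ) := sub_pos.2 he
  have htT : T - Real.exp (-τ) < T := sub_lt_self _ (Real.exp_pos _)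
  have hk12' : 0 < k₁ - k₂ := sub_pos.2 hk12
  exact weighted_propagation (by omega) hm0 ht0 htT hk2 hδ hδN (by positivity)
    (mul_nonneg (by positivity) (mul_nonneg (by positivity)
      (mul_nonneg hk12'.le (Real.rpow_nonneg (sub_pos.2 htT).le _)))) (by positivity) hbδ hu hv
    (fun s hs x => abs_pow_sub_le hm0 hm1' hC hγ hk2 hk12 hs.1.le hs.2 htT
      (htrapu x s ⟨hs.1, hs.2.trans_lt htT⟩) (htrapv x s ⟨hs.1, hs.2.trans_lt htT⟩)) h0
end
end

section
/- Let N ≥ 3 and 0 < m < (N-2)/N. Let v be a solution of the fast diffusion equation on ℝ^N × (0,T) with initial value v₀, satisfying the Aronson–Bénilan inequality ∂ₜv(x,t) ≤ v(x,t)/((1-m)t) for all (x,t) ∈ ℝ^N × (0,T). Assume v₀(x) ≤ f(x) for all x, where f ∈ L¹(ℝ^N) is nonnegative and radially symmetric. Then for every t ∈ (0,T) there exists a constant C(t) such that v(x,t) ≤ C(t)/|x|^{(N-2)/m} for all |x| > 1. -/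
/-!
The proof bounds the time integral `W = ∫₀ᵗ v ^ m ds`. Integrating the equation in time gives
`Δ W = v(·, t) - v₀ ≥ -f`, so `W` is subharmonic up to the radial mass `f`.

* Test functions are the powers of `cut x r y = (1 - |y - x|² / r²)₊`. The `r`-derivative of
  `r ^ (-N) * cut ^ (j + 1)` is a positive multiple of the Laplacian of `cut ^ (j + 2)`
  (`hasDerivAt_cut_radius`), so the weighted averages `M(r)` of `W` over balls about `x` satisfy
  `M'(r) ≥ - r ^ (1 - N) ∫_{B(x, r)} f`.
* Since `f` is radial, `∫_{B(x, r)} f ≤ A (r / |x|) ^ (N - 1)` (`exists_radial_mass_le`): the ball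
  is contained in a cone of opening comparable to `r / |x|`. Using this bound for `r ≤ |x|` and
  `∫ f ≤ A` for `r ≥ |x|`, integration of the inequality for `M'` gives
  `M(r) ≤ M(R) + 2 A |x| ^ (2 - N)` for `r ≤ |x| ≤ R`.
* `M(R) → 0` as `R → ∞` (`average_small`). This is the Herrero–Pierre argument: a high power of the
  cutoff absorbs `v ^ m |Δ cut ^ (j + 2)|` into a small multiple of the localized mass plus a
  volume term, so the mass in a ball of radius `R` is at most of order `1 + R ^ (N - 2)`.
* Hence `W(x) ≤ C |x| ^ (2 - N)`, and by the Aronson–Bénilan inequality `v(x, s)` is comparable from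
  below to `v(x, t)` for `s ∈ [t / 2, t]` (`lower_bound_of_AB`), so `v(x, t) ^ m ≤ C W(x)`.
-/

open MeasureTheory Real Filter Topology RealInnerProductSpace

noncomputable section

namespace FDE

open scoped ContDiff Pointwise

/-! ### Cutoff functions and integration by parts -/

lemma hasDerivAt_posPart_pow (j : ℕ) (s : ℝ) :
    HasDerivAt (fun s : ℝ => max s 0 ^ (j + 2)) ((j + 2) * max s 0 ^ (j + 1)) s := by
  rcases lt_trichotomy s 0 with h | h | h
  · have : (fun s : ℝ => max s 0 ^ (j + 2)) =ᶠ[𝓝 s] fun _ => 0 := by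
      filter_upwards [Iio_mem_nhds h] with u hu
      simp [max_eq_right (Set.mem_Iio.1 hu).le]
    have h2 := (hasDerivAt_const s (0:ℝ)).congr_of_eventuallyEq this
    simpa [max_eq_right h.le] using h2
  · subst h
    have h0 : HasDerivAt (fun s : ℝ => s ^ (j + 2)) 0 0 := by
      simpa using hasDerivAt_pow (j + 2) (0:ℝ)
    have h1 : HasDerivAt (fun s : ℝ => max s 0 ^ (j + 2)) 0 0 := by
      rw [hasDerivAt_iff_isLittleO] at h0 ⊢
      refine (Asymptotics.isBigO_of_le _ fun u => ?_).trans_isLittleO h0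
      simp only [max_self, ne_eq, Nat.add_eq_zero_iff, OfNat.ofNat_ne_zero, and_false,
        not_false_eq_true, zero_pow, sub_zero, smul_zero]
      rw [norm_pow, norm_pow]
      simp only [Real.norm_eq_abs]
      refine pow_le_pow_left₀ (abs_nonneg _) ?_ _
      rw [abs_of_nonneg (le_max_right _ _)]
      exact max_le (le_abs_self _) (abs_nonneg _)
    simpa using h1
  · have : (fun s : ℝ => max s 0 ^ (j + 2)) =ᶠ[𝓝 s] fun u => u ^ (j + 2) := by
      filter_upwards [Ioi_mem_nhds h] with u hu
      simp [max_eq_left (Set.mem_Ioi.1 hu).le]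
    have h2 := (hasDerivAt_pow (j + 2) s).congr_of_eventuallyEq this
    simpa [max_eq_left h.le] using h2

/-- The truncated paraboloid `(1 - |y - x|² / r²)₊`, supported in the ball of radius `r` about `x`.
Its powers serve as test functions. -/
def cut {N : ℕ} (x : Euc N) (r : ℝ) (y : Euc N) : ℝ := max (1 - ‖y - x‖ ^ 2 / r ^ 2) 0

/-- The Laplacian in `y` of `cut x r y ^ (j + 2)`. -/
def lapCut {N : ℕ} (j : ℕ) (x : Euc N) (r : ℝ) (y : Euc N) : ℝ :=
  (j + 2) * (4 * (j + 1) * cut x r y ^ j * ‖y - x‖ ^ 2 / r ^ 4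
    - 2 * N * cut x r y ^ (j + 1) / r ^ 2)

variable {N : ℕ}

lemma cut_nonneg (x : Euc N) (r : ℝ) (y : Euc N) : 0 ≤ cut x r y := le_max_right _ _

lemma cut_le_one (x : Euc N) (r : ℝ) (y : Euc N) : cut x r y ≤ 1 :=
  max_le (by have : 0 ≤ ‖y - x‖ ^ 2 / r ^ 2 := by positivity
             linarith) zero_le_one

lemma cut_eq_zero {x y : Euc N} {r : ℝ} (hr : 0 < r) (h : r ≤ ‖y - x‖) : cut x r y = 0 := by
  apply max_eq_right
  have : 1 ≤ ‖y - x‖ ^ 2 / r ^ 2 := by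
    rw [one_le_div (by positivity)]; gcongr
  linarith

lemma continuous_cut (x : Euc N) (r : ℝ) : Continuous (cut x r) := by
  unfold cut; fun_prop

lemma continuous_lapCut (j : ℕ) (x : Euc N) (r : ℝ) : Continuous (lapCut j x r) := by
  have := continuous_cut x r
  unfold lapCut; fun_prop

lemma lapCut_eq_zero {j : ℕ} (hj : 1 ≤ j) {x y : Euc N} {r : ℝ} (hr : 0 < r) (h : r ≤ ‖y - x‖) :
    lapCut j x r y = 0 := by
  simp [lapCut, cut_eq_zero hr h, show j ≠ 0 by omega]

lemma hasCompactSupport_of_zero {g : Euc N → ℝ} {x : Euc N} {r : ℝ}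
    (h : ∀ y, r ≤ ‖y - x‖ → g y = 0) : HasCompactSupport g := by
  refine HasCompactSupport.intro (isCompact_closedBall x r) fun y hy => h y ?_
  rw [Metric.mem_closedBall, dist_eq_norm, not_le] at hy
  exact hy.le

lemma hasLineDerivAt_cut_pow (j : ℕ) (x : Euc N) (r : ℝ) (y e : Euc N) :
    HasLineDerivAt ℝ (fun y => cut x r y ^ (j + 2))
      ((j + 2) * cut x r y ^ (j + 1) * (-(2 * inner ℝ (y - x) e) / r ^ 2)) y e := by
  unfold HasLineDerivAt
  have h1 : HasDerivAt (fun t : ℝ => y + t • e - x) e 0 := by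
    have := (((hasDerivAt_id (0:ℝ)).smul_const e).const_add y).sub_const x
    simpa using this
  have h2 := ((h1.norm_sq.div_const (r ^ 2)).const_sub 1)
  have h3 := hasDerivAt_posPart_pow j (1 - ‖y + (0:ℝ) • e - x‖ ^ 2 / r ^ 2)
  have h4 := HasDerivAt.comp (0:ℝ) h3 h2
  simp only [zero_smul, add_zero] at h4
  refine HasDerivAt.congr_deriv (f := fun t : ℝ => cut x r (y + t • e) ^ (j + 2)) h4 ?_
  unfold cut
  ring

lemma ibp {f f' g g' : Euc N → ℝ} {e : Euc N} (hf : Continuous f) (hf' : Continuous f')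
    (hg : Continuous g) (hg' : Continuous g') (hs : HasCompactSupport g)
    (hs' : HasCompactSupport g') (hfd : ∀ x, HasLineDerivAt ℝ f (f' x) x e)
    (hgd : ∀ x, HasLineDerivAt ℝ g (g' x) x e) :
    ∫ x, f x * g' x = - ∫ x, f' x * g x :=
  integral_bilinear_hasLineDerivAt_right_eq_neg_left_of_integrable
    (B := ContinuousLinearMap.mul ℝ ℝ)
    ((hf'.mul hg).integrable_of_hasCompactSupport hs.mul_left)
    ((hf.mul hg').integrable_of_hasCompactSupport hs'.mul_left)
    ((hf.mul hg).integrable_of_hasCompactSupport hs.mul_left)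
    (fun x _ => hfd x) (fun x _ => hgd x)

/-- Green's second identity against the test functions `cut ^ (j + 2)`. -/
lemma integral_lapl_mul_cut {p : Euc N → ℝ} (hp : ContDiff ℝ 2 p) {j : ℕ} (hj : 1 ≤ j) (x : Euc N)
    {r : ℝ} (hr : 0 < r) :
    ∫ y, lapl p y * cut x r y ^ (j + 2) = ∫ y, p y * lapCut j x r y := by
  have hc := continuous_cut x r
  have hp1 : ContDiff ℝ 1 (fderiv ℝ p) := hp.fderiv_right (by norm_num)
  have hp2 : Continuous (fderiv ℝ (fderiv ℝ p)) := hp1.continuous_fderiv (by norm_num)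
  have key : ∀ e : Euc N,
      ∫ y, fderiv ℝ (fderiv ℝ p) y e e * cut x r y ^ (j + 2)
      = ∫ y, p y * ((j + 2) * (4 * (j + 1) * cut x r y ^ j * inner ℝ (y - x) e ^ 2 / r ^ 4
          - 2 * ‖e‖ ^ 2 * cut x r y ^ (j + 1) / r ^ 2)) := by
    intro e
    obtain ⟨i, rfl⟩ : ∃ i, j = i + 1 := ⟨j - 1, by omega⟩
    have d1 : ∀ y, HasLineDerivAt ℝ p (fderiv ℝ p y e) y e := fun y =>
      ((hp.differentiable (by norm_num)) y).hasFDerivAt.hasLineDerivAt e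
    have d2 : ∀ y, HasLineDerivAt ℝ (fun y => fderiv ℝ p y e)
        (fderiv ℝ (fderiv ℝ p) y e e) y e := fun y => by
      have h := ((hp1.differentiable (by norm_num)) y).hasFDerivAt
      exact (h.clm_apply (hasFDerivAt_const e y)).hasLineDerivAt e |>.congr_deriv (by simp)
    have d3 := fun y => hasLineDerivAt_cut_pow (i + 1) x r y e
    have d4 : ∀ y, HasLineDerivAt ℝ (fun y => ((i + 1 : ℕ) + 2 : ℝ) * cut x r y ^ (i + 1 + 1)
          * (-(2 * inner ℝ (y - x) e) / r ^ 2))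
        (((i + 1 : ℕ) + 2) * (4 * ((i + 1 : ℕ) + 1) * cut x r y ^ (i + 1)
          * inner ℝ (y - x) e ^ 2 / r ^ 4
          - 2 * ‖e‖ ^ 2 * cut x r y ^ (i + 1 + 1) / r ^ 2)) y e := by
      intro y
      have h1 : HasDerivAt (fun t : ℝ => y + t • e - x) e 0 := by
        have := (((hasDerivAt_id (0:ℝ)).smul_const e).const_add y).sub_const x
        simpa using this
      have h2 := ((h1.inner ℝ (hasDerivAt_const 0 e)).const_mul 2).neg.div_const (r ^ 2)
      have h3 := hasLineDerivAt_cut_pow i x r y e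
      unfold HasLineDerivAt at h3 ⊢
      have h4 := ((h3.const_mul ((i + 1 : ℕ) + 2 : ℝ)).mul h2)
      refine HasDerivAt.congr_deriv h4 ?_
      simp only [Pi.neg_apply, zero_smul, add_zero, inner_zero_right, real_inner_self_eq_norm_sq]
      push_cast
      field_simp
      ring
    have s0 : ∀ n : ℕ, n ≠ 0 → HasCompactSupport (fun y => cut x r y ^ n) := fun n hn =>
      hasCompactSupport_of_zero (x := x) (r := r) fun y hy => by
        simp [cut_eq_zero hr hy, hn]
    have s1 : HasCompactSupport (fun y => ((i + 1 : ℕ) + 2 : ℝ) * cut x r y ^ (i + 1 + 1)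
          * (-(2 * inner ℝ (y - x) e) / r ^ 2)) :=
      hasCompactSupport_of_zero (x := x) (r := r) fun y hy => by simp [cut_eq_zero hr hy]
    have s2 : HasCompactSupport (fun y => ((i + 1 : ℕ) + 2 : ℝ) * (4 * ((i + 1 : ℕ) + 1)
          * cut x r y ^ (i + 1) * inner ℝ (y - x) e ^ 2 / r ^ 4
          - 2 * ‖e‖ ^ 2 * cut x r y ^ (i + 1 + 1) / r ^ 2)) :=
      hasCompactSupport_of_zero (x := x) (r := r) fun y hy => by simp [cut_eq_zero hr hy]
    have cp' : Continuous fun y => fderiv ℝ p y e := hp1.continuous.clm_apply continuous_const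
    have cp'' : Continuous fun y => fderiv ℝ (fderiv ℝ p) y e e :=
      (hp2.clm_apply continuous_const).clm_apply continuous_const
    have e1 := ibp (e := e) cp' cp'' (g := fun y => cut x r y ^ (i + 1 + 2)) (by fun_prop) (by fun_prop) (s0 _ (by omega)) s1 d2 d3
    have e2 := ibp (e := e) hp.continuous cp' (g := fun y => ((i + 1 : ℕ) + 2 : ℝ)
      * cut x r y ^ (i + 1 + 1) * (-(2 * inner ℝ (y - x) e) / r ^ 2)) (by fun_prop) (by fun_prop)
      s1 s2 d1 d4
    linarith
  have hL : ∀ y, lapl p y * cut x r y ^ (j + 2) = ∑ i : Fin N,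
      fderiv ℝ (fderiv ℝ p) y (EuclideanSpace.single i 1) (EuclideanSpace.single i 1)
        * cut x r y ^ (j + 2) := by
    intro y
    simp [lapl, iteratedFDeriv_two_apply, Finset.sum_mul]
  have hR : ∀ y, p y * lapCut j x r y = ∑ i : Fin N,
      p y * ((j + 2) * (4 * (j + 1) * cut x r y ^ j
          * inner ℝ (y - x) (EuclideanSpace.single i (1:ℝ)) ^ 2 / r ^ 4
          - 2 * ‖(EuclideanSpace.single i (1:ℝ) : Euc N)‖ ^ 2 * cut x r y ^ (j + 1) / r ^ 2)) := by
    intro y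
    have hs : ∀ i : Fin N, inner ℝ (y - x) (EuclideanSpace.single i (1:ℝ)) = (y - x) i := by
      intro i; simp [EuclideanSpace.inner_single_right]
    simp_rw [hs]
    rw [← Finset.mul_sum, ← Finset.mul_sum, Finset.sum_sub_distrib, lapCut,
      EuclideanSpace.real_norm_sq_eq]
    simp only [← Finset.sum_div, ← Finset.mul_sum]
    simp
    ring_nf
    simp
  simp_rw [hL, hR]
  rw [integral_finsetSum, integral_finsetSum]
  · exact Finset.sum_congr rfl fun i _ => key _
  · intro i _
    refine Continuous.integrable_of_hasCompactSupport (by have := hp.continuous; fun_prop) ?_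
    exact hasCompactSupport_of_zero (x := x) (r := r) fun y hy => by
      simp [cut_eq_zero hr hy, show j ≠ 0 by omega]
  · intro i _
    refine Continuous.integrable_of_hasCompactSupport ?_ ?_
    · exact ((hp2.clm_apply continuous_const).clm_apply continuous_const).mul (hc.pow _)
    exact hasCompactSupport_of_zero (x := x) (r := r) fun y hy => by
      simp [cut_eq_zero hr hy]

/-- Multiplying by `r ^ (-N)` turns the `r`-derivative of a power of `cut` into a multiple of the
Laplacian of the next power. -/
lemma hasDerivAt_cut_radius (j : ℕ) (hj : 1 ≤ j) (x y : Euc N) {r : ℝ} (hr : 0 < r) :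
    HasDerivAt (fun r => (r ^ N)⁻¹ * cut x r y ^ (j + 1))
      (r * (r ^ N)⁻¹ / (2 * (j + 2)) * lapCut j x r y) r := by
  obtain ⟨i, rfl⟩ : ∃ i, j = i + 1 := ⟨j - 1, by omega⟩
  have h1 : HasDerivAt (fun r : ℝ => 1 - ‖y - x‖ ^ 2 / r ^ 2) (2 * ‖y - x‖ ^ 2 / r ^ 3) r := by
    have := ((hasDerivAt_const r (‖y - x‖ ^ 2)).div (hasDerivAt_pow 2 r) (by positivity)).const_sub 1
    refine this.congr_deriv ?_
    field_simp
    ring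
  have h2 := HasDerivAt.comp r (hasDerivAt_posPart_pow i (1 - ‖y - x‖ ^ 2 / r ^ 2)) h1
  have h3 : HasDerivAt (fun r : ℝ => (r ^ N)⁻¹) (-(N * (r ^ N)⁻¹ / r)) r := by
    have := (hasDerivAt_pow N r).inv (by positivity)
    refine HasDerivAt.congr_deriv (f := fun r : ℝ => (r ^ N)⁻¹) this ?_
    rcases N with _ | n
    · simp
    · simp only [Nat.add_sub_cancel]
      field_simp
      ring
  have h4 := h3.mul h2
  refine HasDerivAt.congr_deriv (f := fun r => (r ^ N)⁻¹ * cut x r y ^ (i + 1 + 1)) h4 ?_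
  simp only [lapCut, cut, Function.comp]
  push_cast
  field_simp
  ring

/-! ### Mass of a radial function in a ball off the origin -/

/-- A point of the ball of radius `r` about `ρ e₀` has direction within `r / ρ` of the axis `ℝ e₀`:
the area of the parallelogram spanned by `y` and `ρ e₀` is at most `‖y‖ r`. -/
lemma abs_coord_le_of_mem_closedBall {n : ℕ} {ρ r : ℝ} (hρ : 0 < ρ) (y : Euc (n + 1))
    (hy : y ∈ Metric.closedBall (ρ • EuclideanSpace.single 0 (1:ℝ) : Euc (n + 1)) r)
    (i : Fin (n + 1)) (hi : i ≠ 0) : |y i| ≤ r / ρ * ‖y‖ := by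
  have hr : 0 ≤ r := dist_nonneg.trans (Metric.mem_closedBall.1 hy)
  have pair : ∀ z : Euc (n + 1), z 0 ^ 2 + z i ^ 2 ≤ ‖z‖ ^ 2 := by
    intro z
    rw [EuclideanSpace.real_norm_sq_eq, ← Finset.sum_pair (f := fun j => z j ^ 2) hi.symm]
    exact Finset.sum_le_sum_of_subset_of_nonneg (Finset.subset_univ _) fun _ _ _ => sq_nonneg _
  have h1 := pair y
  have h2 := pair (y - ρ • EuclideanSpace.single 0 (1:ℝ))
  have h3 : ‖y - ρ • EuclideanSpace.single 0 (1:ℝ)‖ ^ 2 ≤ r ^ 2 := by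
    rw [Metric.mem_closedBall, dist_eq_norm] at hy
    gcongr
  have e0 : (y - ρ • EuclideanSpace.single 0 (1:ℝ) : Euc (n + 1)) 0 = y 0 - ρ := by simp
  have ei : (y - ρ • EuclideanSpace.single 0 (1:ℝ) : Euc (n + 1)) i = y i := by simp [hi]
  rw [e0, ei] at h2
  have h4 : (y 0 ^ 2 + y i ^ 2) * ((y 0 - ρ) ^ 2 + y i ^ 2) ≤ ‖y‖ ^ 2 * r ^ 2 :=
    mul_le_mul h1 (h2.trans h3) (by positivity) (by positivity)
  have h5 : (|y i| * ρ) ^ 2 ≤ (r * ‖y‖) ^ 2 := by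
    rw [mul_pow, sq_abs]
    nlinarith [sq_nonneg (y 0 * (y 0 - ρ) + y i ^ 2)]
  have h6 := abs_le_of_sq_le_sq' h5 (by positivity)
  rw [div_mul_eq_mul_div, le_div_iff₀ hρ]
  exact h6.2

/-- The spherical cap of directions making an angle of size about `s` with the axis `ℝ e₀`
(both poles included). -/
def cap (n : ℕ) (s : ℝ) : Set (Metric.sphere (0 : Euc (n + 1)) 1) :=
  {w | ∀ i : Fin (n + 1), i ≠ 0 → |(w : Euc (n + 1)) i| ≤ s}

lemma measurableSet_cap (n : ℕ) (s : ℝ) : MeasurableSet (cap n s) := by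
  have : cap n s = ⋂ i : Fin (n + 1), ⋂ _ : i ≠ 0,
      {w : Metric.sphere (0 : Euc (n + 1)) 1 | |(w : Euc (n + 1)) i| ≤ s} := by
    ext; simp [cap]
  rw [this]
  refine (isClosed_iInter fun i => isClosed_iInter fun _ => isClosed_le ?_ ?_).measurableSet
  · fun_prop
  · fun_prop

lemma toSphere_cap_le (n : ℕ) {s : ℝ} (hs : 0 ≤ s) :
    (volume : Measure (Euc (n + 1))).toSphere.real (cap n s) ≤ (n + 1) * (2 * (2 * s) ^ n) := by
  set b : Fin (n + 1) → ℝ := Fin.cons 1 fun _ => s with hb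
  have hsub : Set.Ioo (0:ℝ) 1 • ((Subtype.val '' cap n s : Set (Euc (n + 1)))) ⊆
      WithLp.ofLp ⁻¹' (Set.Icc (-b) b) := by
    rintro _ ⟨t, ht, _, ⟨w, hw, rfl⟩, rfl⟩
    have hc : ∀ i : Fin (n + 1), |(t • (w : Euc (n + 1))) i| ≤ b i := by
      intro i
      have h0 : |(t • (w : Euc (n + 1))) i| = t * |(w : Euc (n + 1)) i| := by
        simp [abs_mul, abs_of_pos ht.1]
      rw [h0]
      have h1 : t * |(w : Euc (n + 1)) i| ≤ |(w : Euc (n + 1)) i| :=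
        mul_le_of_le_one_left (abs_nonneg _) ht.2.le
      refine h1.trans ?_
      rcases Fin.eq_zero_or_eq_succ i with rfl | ⟨k, rfl⟩
      · have := PiLp.norm_apply_le (w : Euc (n + 1)) 0
        simpa [hb, norm_eq_of_mem_sphere w] using this
      · simpa [hb] using hw k.succ (Fin.succ_ne_zero k)
    exact ⟨fun i => (abs_le.1 (hc i)).1, fun i => (abs_le.1 (hc i)).2⟩
  have hvol : volume (WithLp.ofLp ⁻¹' (Set.Icc (-b) b) : Set (Euc (n + 1)))
      = ENNReal.ofReal (2 * (2 * s) ^ n) := by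
    rw [(PiLp.volume_preserving_ofLp (Fin (n + 1))).measure_preimage
      measurableSet_Icc.nullMeasurableSet, Real.volume_Icc_pi, Fin.prod_univ_succ,
      ENNReal.ofReal_mul (by norm_num), ENNReal.ofReal_pow (by positivity)]
    simp [hb, ← two_mul]
  have h1 := measure_mono (μ := volume) hsub
  rw [hvol] at h1
  rw [Measure.real, Measure.toSphere_apply' _ (measurableSet_cap n s)]
  refine ENNReal.toReal_le_of_le_ofReal (by positivity) ?_
  rw [ENNReal.ofReal_mul (by positivity)]
  refine mul_le_mul' ?_ h1
  rw [finrank_euclideanSpace_fin, show ((n:ℝ) + 1) = ((n + 1 : ℕ) : ℝ) by push_cast; rfl,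
    ENNReal.ofReal_natCast]

/-- The mass of a radial integrable function in a ball of radius `r` about `x` is at most a
multiple of `(r / ‖x‖) ^ (N - 1)`: such a ball lies in a cone over a cap of size `r / ‖x‖`, and a
radial density charges a cone proportionally to the measure of its cap. -/
lemma exists_radial_mass_le {n : ℕ} {f : Euc (n + 1) → ℝ} (hf : Integrable f volume)
    (hpos : ∀ x, 0 ≤ f x) (hrad : IsRadial f) :
    ∃ A : ℝ, 0 ≤ A ∧ ∀ (x : Euc (n + 1)) (r : ℝ), x ≠ 0 → 0 ≤ r →
      ∫ y in Metric.closedBall x r, f y ≤ A * (r / ‖x‖) ^ n := by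
  set e : Euc (n + 1) := EuclideanSpace.single 0 1 with he
  have hen : ‖e‖ = 1 := by simp [he]
  set φ : ℝ → ℝ := fun s => f (s • e) with hφ
  have hfφ : ∀ y, f y = φ ‖y‖ := fun y => hrad _ _ (by simp [norm_smul, hen])
  set I : ℝ := ∫ s : Set.Ioi (0:ℝ), φ s ∂(Measure.volumeIoiPow n) with hI
  have hI0 : 0 ≤ I := integral_nonneg fun s => hpos _
  refine ⟨(n + 1) * (2 * 2 ^ n) * I, by positivity, fun x r hx hr => ?_⟩
  have hxp : 0 < ‖x‖ := norm_pos_iff.2 hx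
  -- a reflection brings the centre onto the axis
  have hrot : ∫ y in Metric.closedBall x r, f y = ∫ y in Metric.closedBall (‖x‖ • e) r, f y := by
    set R := (Submodule.reflection (Submodule.span ℝ {x - ‖x‖ • e})ᗮ) with hR
    have hRx : R x = ‖x‖ • e := by
      rw [hR]
      exact Submodule.reflection_sub (by simp [norm_smul, hen])
    have h1 := R.measurePreserving.setIntegral_preimage_emb
      R.toHomeomorph.measurableEmbedding f (Metric.closedBall (‖x‖ • e) r)
    rw [← h1, ← hRx, R.isometry.preimage_closedBall]
    exact setIntegral_congr_fun measurableSet_closedBall fun y _ => hrad _ _ (by simp)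
  set s := r / ‖x‖ with hs
  set K : Set (Euc (n + 1)) := {y | ∀ i : Fin (n + 1), i ≠ 0 → |y i| ≤ s * ‖y‖} with hK
  have hKm : MeasurableSet K := by
    have : K = ⋂ i : Fin (n + 1), ⋂ _ : i ≠ 0, {y | |y i| ≤ s * ‖y‖} := by
      ext; simp [hK]
    rw [this]
    exact (isClosed_iInter fun i => isClosed_iInter fun _ =>
      isClosed_le (by fun_prop) (by fun_prop)).measurableSet
  have hBK : Metric.closedBall (‖x‖ • e) r ⊆ K := fun y hy i hi =>
    abs_coord_le_of_mem_closedBall hxp y hy i hi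
  have h1 : ∫ y in Metric.closedBall (‖x‖ • e) r, f y ≤ ∫ y in K, f y :=
    setIntegral_mono_set hf.integrableOn (ae_of_all _ hpos) hBK.eventuallyLE
  have h2 : ∫ y in K, f y = volume.toSphere.real (cap n s) * I := by
    rw [← integral_indicator hKm]
    calc ∫ y, K.indicator f y
        = ∫ y : ({(0)}ᶜ : Set (Euc (n + 1))), K.indicator f y ∂(volume.comap Subtype.val) := by
          rw [integral_subtype_comap (measurableSet_singleton _).compl fun y => K.indicator f y,
            restrict_compl_singleton]
      _ = ∫ p, (cap n s).indicator (fun _ => (1:ℝ)) p.1 * φ p.2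
            ∂(volume : Measure (Euc (n + 1))).toSphere.prod (.volumeIoiPow n) := by
          have := (volume : Measure (Euc (n + 1))).measurePreserving_homeomorphUnitSphereProd
          have h := this.integral_comp (Homeomorph.measurableEmbedding _)
            (fun p => (cap n s).indicator (fun _ => (1:ℝ)) p.1 * φ p.2)
          rw [finrank_euclideanSpace_fin, Nat.add_sub_cancel] at h
          rw [← h]
          congr 1
          ext ⟨y, hy⟩
          have hy' : 0 < ‖y‖ := norm_pos_iff.2 hy
          have hiff : (homeomorphUnitSphereProd (Euc (n + 1)) ⟨y, hy⟩).1 ∈ cap n s ↔ y ∈ K := by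
            simp only [cap, hK, Set.mem_ofPred_eq, homeomorphUnitSphereProd_apply_fst_coe]
            refine forall_congr' fun i => imp_congr_right fun _ => ?_
            simp only [PiLp.smul_apply, smul_eq_mul, abs_mul, abs_inv, abs_norm]
            rw [inv_mul_le_iff₀ hy', mul_comm]
          by_cases hyK : y ∈ K
          · rw [Set.indicator_of_mem (hiff.2 hyK), Set.indicator_of_mem hyK]
            simp [hfφ y]
          · rw [Set.indicator_of_notMem (mt hiff.1 hyK), Set.indicator_of_notMem hyK]
            simp
      _ = (∫ w, (cap n s).indicator (fun _ => (1:ℝ)) w ∂(volume : Measure (Euc (n + 1))).toSphere) * I :=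
          integral_prod_mul _ (fun t : Set.Ioi (0:ℝ) => φ t)
      _ = _ := by rw [integral_indicator_const _ (measurableSet_cap n s)]; simp
  have hs0 : 0 ≤ s := by positivity
  calc _ ≤ volume.toSphere.real (cap n s) * I := by rw [hrot, ← h2]; exact h1
    _ ≤ ((n + 1) * (2 * (2 * s) ^ n)) * I := by gcongr; exact toSphere_cap_le n hs0
    _ = _ := by rw [mul_pow]; ring

/-! ### Integrals depending on a parameter and the weak form of the equation -/

lemma integrable_of_zero {g : Euc N → ℝ} (hg : Continuous g) {x : Euc N} {r : ℝ}
    (h : ∀ y, r ≤ ‖y - x‖ → g y = 0) : Integrable g volume :=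
  hg.integrable_of_hasCompactSupport (hasCompactSupport_of_zero h)

lemma norm_sub_of_notMem_closedBall {x y : Euc N} {r : ℝ} (h : y ∉ Metric.closedBall x r) :
    r ≤ ‖y - x‖ := by
  rw [Metric.mem_closedBall, dist_eq_norm, not_le] at h
  exact h.le

lemma continuous_integral_param {G : ℝ → Euc N → ℝ} (hG : Continuous (Function.uncurry G))
    {x : Euc N} {r : ℝ} (h : ∀ σ y, r ≤ ‖y - x‖ → G σ y = 0) :
    Continuous fun σ => ∫ y, G σ y := by
  have h1 := continuous_parametric_integral_of_continuous (μ := volume) hG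
    (isCompact_closedBall x r)
  refine h1.congr fun σ => ?_
  exact setIntegral_eq_integral_of_forall_compl_eq_zero fun y hy =>
    h σ y (norm_sub_of_notMem_closedBall hy)

lemma integral_swap_param {G : ℝ → Euc N → ℝ} (hG : Continuous (Function.uncurry G))
    {x : Euc N} {r : ℝ} (h : ∀ σ y, r ≤ ‖y - x‖ → G σ y = 0) {t : ℝ} (ht : 0 ≤ t) :
    ∫ σ in (0:ℝ)..t, ∫ y, G σ y = ∫ y, ∫ σ in (0:ℝ)..t, G σ y := by
  refine intervalIntegral_integral_swap ?_
  have h1 : IntegrableOn (Function.uncurry G) (Set.Icc 0 t ×ˢ Metric.closedBall x r)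
      (volume.prod volume) :=
    hG.continuousOn.integrableOn_compact (isCompact_Icc.prod (isCompact_closedBall x r))
  have h2 : IntegrableOn (Function.uncurry G) (Set.uIoc 0 t ×ˢ Set.univ)
      (volume.prod volume) := by
    refine h1.of_forall_sdiff_eq_zero (measurableSet_uIoc.prod MeasurableSet.univ) ?_
    rintro ⟨σ, y⟩ ⟨⟨hσ, -⟩, hn⟩
    rw [Set.uIoc_of_le ht] at hσ
    exact h σ y (norm_sub_of_notMem_closedBall fun hy => hn ⟨Set.Ioc_subset_Icc_self hσ, hy⟩)
  rw [IntegrableOn, ← Measure.prod_restrict, Measure.restrict_univ] at h2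
  exact h2

/-- Differentiation under the integral sign for integrands supported in a fixed ball. -/
lemma hasDerivAt_integral_param {F F' : ℝ → Euc N → ℝ} {U : Set ℝ} (hU : IsOpen U)
    {x : Euc N} {ρ : ℝ} (hF : ∀ s ∈ U, Continuous (F s))
    (hF0 : ∀ s ∈ U, ∀ y, ρ ≤ ‖y - x‖ → F s y = 0)
    (hF' : ContinuousOn (Function.uncurry F') (U ×ˢ Set.univ))
    (hF'0 : ∀ s ∈ U, ∀ y, ρ ≤ ‖y - x‖ → F' s y = 0)
    (hd : ∀ s ∈ U, ∀ y, HasDerivAt (fun s => F s y) (F' s y) s) {s : ℝ} (hs : s ∈ U) :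
    HasDerivAt (fun s => ∫ y, F s y) (∫ y, F' s y) s := by
  obtain ⟨ε, hε, hεU⟩ := Metric.nhds_basis_closedBall.mem_iff.1 (hU.mem_nhds hs)
  obtain ⟨C, hC⟩ := ((isCompact_closedBall s ε).prod
    (isCompact_closedBall x ρ)).exists_bound_of_continuousOn
    (hF'.mono (Set.prod_mono hεU (Set.subset_univ _)))
  have hcs : Continuous (F' s) := by
    have := hF'.comp_continuous (f := fun y : Euc N => (s, y)) (by fun_prop)
      fun y => ⟨hs, trivial⟩
    exact this
  refine (hasDerivAt_integral_of_dominated_loc_of_deriv_le (Metric.closedBall_mem_nhds s hε)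
    (bound := (Metric.closedBall x ρ).indicator fun _ => C) ?_
    (integrable_of_zero (hF s hs) (hF0 s hs)) hcs.aestronglyMeasurable ?_ ?_ ?_).2
  · filter_upwards [hU.mem_nhds hs] with a ha using (hF a ha).aestronglyMeasurable
  · refine ae_of_all _ fun y a ha => ?_
    by_cases hy : y ∈ Metric.closedBall x ρ
    · rw [Set.indicator_of_mem hy]
      exact hC (a, y) ⟨ha, hy⟩
    · rw [Set.indicator_of_notMem hy, hF'0 a (hεU ha) y (norm_sub_of_notMem_closedBall hy),
        norm_zero]
  · rw [integrable_indicator_iff measurableSet_closedBall]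
    exact integrableOn_const (isCompact_closedBall x ρ).measure_lt_top.ne
  · exact ae_of_all _ fun y a ha => hd a (hεU ha) y

/-- The solution extended to all times by freezing it outside `[0, t]`; this makes it jointly
continuous on the whole of `ℝ × ℝ^N`. -/
def frozen (v : Euc N → ℝ → ℝ) (t σ : ℝ) (y : Euc N) : ℝ := v y (max 0 (min σ t))

lemma frozen_eq (v : Euc N → ℝ → ℝ) {t σ : ℝ} (hσ : σ ∈ Set.Icc 0 t) (y : Euc N) :
    frozen v t σ y = v y σ := by
  rw [frozen, min_eq_left hσ.2, max_eq_right hσ.1]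

lemma continuous_frozen {m T : ℝ} {v : Euc N → ℝ → ℝ} {v₀ : Euc N → ℝ}
    (hv : IsFDESol N m T v v₀) {t : ℝ} (ht : t ∈ Set.Ioo 0 T) :
    Continuous (Function.uncurry (frozen v t)) := by
  refine hv.2.2.1.comp_continuous (f := fun p : ℝ × Euc N => (p.2, max 0 (min p.1 t)))
    (by fun_prop) fun p => ⟨trivial, le_max_left _ _, ?_⟩
  exact max_lt (ht.1.trans ht.2) ((min_le_right _ _).trans_lt ht.2)

lemma frozen_nonneg {m T : ℝ} {v : Euc N → ℝ → ℝ} {v₀ : Euc N → ℝ}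
    (hv : IsFDESol N m T v v₀) {t : ℝ} (ht : t ∈ Set.Ioo 0 T) (σ : ℝ) (y : Euc N) :
    0 ≤ frozen v t σ y := by
  -- positivity at positive times passes to time zero by continuity
  have hpos : ∀ s ∈ Set.Ioc 0 t, 0 ≤ frozen v t s y := fun s hs => by
    rw [frozen_eq v ⟨hs.1.le, hs.2⟩]
    exact (hv.1 y s ⟨hs.1, hs.2.trans_lt ht.2⟩).le
  have hc : Continuous fun s => frozen v t s y :=
    (continuous_frozen hv ht).comp (f := fun s : ℝ => (s, y)) (by fun_prop)
  have h0 : 0 ≤ frozen v t 0 y := by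
    have h1 : Tendsto (fun s => frozen v t s y) (𝓝[>] 0) (𝓝 (frozen v t 0 y)) :=
      (hc.tendsto 0).mono_left nhdsWithin_le_nhds
    refine ge_of_tendsto h1 ?_
    filter_upwards [Ioc_mem_nhdsGT ht.1] with s hs using hpos s hs
  rcases le_or_gt σ 0 with hσ | hσ
  · have : frozen v t σ y = frozen v t 0 y := by
      simp [frozen, min_eq_left (hσ.trans ht.1.le), hσ, ht.1.le]
    rw [this]; exact h0
  · have : frozen v t σ y = frozen v t (min σ t) y := by simp [frozen]
    rw [this]
    exact hpos _ ⟨lt_min hσ ht.1, min_le_right _ _⟩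

/-- The equation tested against `cut ^ (j + 2)` and integrated in time. -/
lemma mass_identity {m T : ℝ} (hm0 : 0 < m) {v : Euc N → ℝ → ℝ} {v₀ : Euc N → ℝ}
    (hv : IsFDESol N m T v v₀) {t : ℝ} (ht : t ∈ Set.Ioo 0 T) {j : ℕ} (hj : 1 ≤ j) (x : Euc N)
    {r : ℝ} (hr : 0 < r) {τ : ℝ} (hτ : τ ∈ Set.Icc 0 t) :
    ∫ y, frozen v t τ y * cut x r y ^ (j + 2) = (∫ y, frozen v t 0 y * cut x r y ^ (j + 2))
      + ∫ σ in (0:ℝ)..τ, ∫ y, frozen v t σ y ^ m * lapCut j x r y := by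
  have hu := continuous_frozen hv ht
  have hcut := continuous_cut x r
  have hlap := continuous_lapCut j x r
  have hc1 : Continuous fun σ => ∫ y, frozen v t σ y * cut x r y ^ (j + 2) := by
    refine continuous_integral_param (x := x) (r := r) ?_ fun σ y h => by
      simp [cut_eq_zero hr h]
    exact hu.mul ((hcut.pow _).comp continuous_snd)
  have hc2 : Continuous fun σ => ∫ y, frozen v t σ y ^ m * lapCut j x r y := by
    refine continuous_integral_param (x := x) (r := r) ?_ fun σ y h => by
      simp [lapCut_eq_zero hj hr h]
    exact (hu.rpow_const fun _ => Or.inr hm0.le).mul (hlap.comp continuous_snd)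
  set w : Euc N × ℝ → ℝ := fun p => v p.1 p.2 with hw
  have hopen : IsOpen ((Set.univ : Set (Euc N)) ×ˢ Set.Ioo 0 T) := isOpen_univ.prod isOpen_Ioo
  have hwd : ∀ y, ∀ s ∈ Set.Ioo 0 T, HasDerivAt (fun s => v y s) (fderiv ℝ w (y, s) (0, 1)) s := by
    intro y s hs
    have h1 : HasFDerivAt w (fderiv ℝ w (y, s)) (y, s) :=
      ((hv.2.1.contDiffAt (hopen.mem_nhds ⟨trivial, hs⟩)).differentiableAt
        (by simp)).hasFDerivAt
    have h2 : HasDerivAt (fun s : ℝ => (y, s)) ((0 : Euc N), (1:ℝ)) s :=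
      (hasDerivAt_const s y).prodMk (hasDerivAt_id s)
    exact h1.comp_hasDerivAt s h2
  have hmain : ∀ s ∈ Set.Ioo 0 t, HasDerivAt (fun σ => ∫ y, frozen v t σ y * cut x r y ^ (j + 2))
      (∫ y, frozen v t s y ^ m * lapCut j x r y) s := by
    intro s hs
    have hsT : ∀ a ∈ Set.Ioo 0 t, a ∈ Set.Ioo 0 T := fun a ha => ⟨ha.1, ha.2.trans ht.2⟩
    have h1 : HasDerivAt (fun σ => ∫ y, frozen v t σ y * cut x r y ^ (j + 2))
        (∫ y, fderiv ℝ w (y, s) (0, 1) * cut x r y ^ (j + 2)) s := by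
      refine hasDerivAt_integral_param (F' := fun s y => fderiv ℝ w (y, s) (0, 1) * cut x r y ^ (j + 2))
        (x := x) (ρ := r) (isOpen_Ioo (a := (0:ℝ)) (b := t)) (fun a ha => ?_) (fun a ha y h => by
          simp [cut_eq_zero hr h]) ?_ (fun a ha y h => by
          simp [cut_eq_zero hr h]) (fun a ha y => ?_) hs
      · exact (hu.comp (f := fun y : Euc N => (a, y)) (by fun_prop)).mul (hcut.pow _)
      · have h2 : ContinuousOn (fderiv ℝ w) (Set.univ ×ˢ Set.Ioo 0 T) :=
          hv.2.1.continuousOn_fderiv_of_isOpen hopen (by simp)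
        have h3 : ContinuousOn (fun p : ℝ × Euc N => fderiv ℝ w (p.2, p.1))
            (Set.Ioo 0 t ×ˢ Set.univ) :=
          h2.comp (f := fun p : ℝ × Euc N => (p.2, p.1)) (by fun_prop)
            fun p hp => ⟨trivial, hsT _ hp.1⟩
        exact (h3.clm_apply continuousOn_const).mul ((hcut.pow _).comp continuous_snd).continuousOn
      · refine HasDerivAt.mul_const ?_ _
        refine (hwd y a (hsT a ha)).congr_of_eventuallyEq ?_
        filter_upwards [isOpen_Ioo.mem_nhds ha] with b hb
        exact frozen_eq v (Set.Ioo_subset_Icc_self hb) y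
    refine h1.congr_deriv ?_
    have hp : ContDiff ℝ 2 fun y => v y s ^ m := by
      have h4 : ContDiff ℝ 2 fun y => v y s := by
        refine contDiff_iff_contDiffAt.2 fun y => ?_
        have h5 : ContDiffAt ℝ 2 w (y, s) :=
          (hv.2.1.contDiffAt (hopen.mem_nhds ⟨trivial, hsT s hs⟩)).of_le (by
            change ((2 : ℕ∞) : WithTop ℕ∞) ≤ ((⊤ : ℕ∞) : WithTop ℕ∞)
            exact WithTop.coe_le_coe.2 le_top)
        exact h5.comp y (f := fun y : Euc N => (y, s)) (by fun_prop)
      exact h4.rpow_const_of_ne fun y => (hv.1 y s (hsT s hs)).ne'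
    calc _ = ∫ y, lapl (fun y => v y s ^ m) y * cut x r y ^ (j + 2) := by
          refine integral_congr_ae (ae_of_all _ fun y => ?_)
          have := hv.2.2.2.2 y s (hsT s hs)
          rw [(hwd y s (hsT s hs)).deriv] at this
          simp only [this]
      _ = ∫ y, v y s ^ m * lapCut j x r y := integral_lapl_mul_cut hp hj x hr
      _ = _ := by
          refine integral_congr_ae (ae_of_all _ fun y => ?_)
          simp only [frozen_eq v (Set.Ioo_subset_Icc_self hs) y]
  have := intervalIntegral.integral_eq_sub_of_hasDerivAt_of_le hτ.1 hc1.continuousOn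
    (fun s hs => hmain s ⟨hs.1, hs.2.trans_le hτ.2⟩) (hc2.intervalIntegrable 0 τ)
  rw [this]; ring

/-! ### Growth of the mass in large balls -/

lemma abs_lapCut_le {j : ℕ} (hj : 1 ≤ j) (x : Euc N) {r : ℝ} (hr : 0 < r) (y : Euc N) :
    |lapCut j x r y| ≤ (j + 2) * (4 * (j + 1) + 2 * N) * (r ^ 2)⁻¹ * cut x r y ^ j := by
  have hc0 := cut_nonneg x r y
  have hc1 := cut_le_one x r y
  rcases le_or_gt r ‖y - x‖ with h | h
  · rw [lapCut_eq_zero hj hr h, abs_zero]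
    positivity
  · have h1 : ‖y - x‖ ^ 2 / r ^ 4 ≤ (r ^ 2)⁻¹ := by
      rw [div_le_iff₀ (by positivity), show (r ^ 2)⁻¹ * r ^ 4 = r ^ 2 by field_simp]
      gcongr
    have h2 : cut x r y ^ (j + 1) ≤ cut x r y ^ j :=
      pow_le_pow_of_le_one hc0 hc1 (Nat.le_succ j)
    have h3 : lapCut j x r y = (j + 2) * (4 * (j + 1) * cut x r y ^ j * (‖y - x‖ ^ 2 / r ^ 4)
        - 2 * N * cut x r y ^ (j + 1) * (r ^ 2)⁻¹) := by
      rw [lapCut]; ring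
    rw [h3, abs_mul, abs_of_nonneg (by positivity : (0:ℝ) ≤ (j:ℝ) + 2)]
    calc _ ≤ ((j:ℝ) + 2) * (4 * (j + 1) * cut x r y ^ j * (‖y - x‖ ^ 2 / r ^ 4)
        + 2 * N * cut x r y ^ (j + 1) * (r ^ 2)⁻¹) := by
          gcongr
          refine (abs_sub _ _).trans ?_
          rw [abs_of_nonneg (by positivity), abs_of_nonneg (by positivity)]
      _ ≤ ((j:ℝ) + 2) * (4 * (j + 1) * cut x r y ^ j * (r ^ 2)⁻¹
        + 2 * N * cut x r y ^ j * (r ^ 2)⁻¹) := by gcongr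
      _ = _ := by ring

/-- Concavity of `a ↦ a ^ m` in a form with a free scale `δ`. -/
lemma rpow_le_add {a δ m : ℝ} (ha : 0 ≤ a) (hδ : 0 < δ) (hm0 : 0 < m) (hm1 : m < 1) :
    a ^ m ≤ δ ^ m + δ ^ (m - 1) * a := by
  rcases le_or_gt a δ with h | h
  · have := rpow_le_rpow ha h hm0.le
    have : 0 ≤ δ ^ (m - 1) * a := by positivity
    linarith
  · have h1 : a ^ m = a ^ (m - 1) * a := by
      rw [← rpow_add_one (hδ.trans h).ne']; simp
    have h2 : a ^ (m - 1) ≤ δ ^ (m - 1) := rpow_le_rpow_of_nonpos hδ h.le (by linarith)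
    have : 0 ≤ δ ^ m := by positivity
    nlinarith

/-- The condition `m (j + 2) ≤ j` says that `c ^ j ≤ (c ^ (j + 2)) ^ m` for `c ≤ 1`, so the power of
the cutoff left after differentiating still localizes `a` itself. -/
lemma rpow_mul_pow_le {a c δ m : ℝ} (ha : 0 ≤ a) (hc0 : 0 ≤ c) (hc1 : c ≤ 1) (hδ : 0 < δ)
    (hm0 : 0 < m) (hm1 : m < 1) {j : ℕ} (hj1 : 1 ≤ j) (hj : m * (j + 2) ≤ j) :
    a ^ m * c ^ j ≤ δ ^ m + δ ^ (m - 1) * (a * c ^ (j + 2)) := by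
  rcases hc0.eq_or_lt with rfl | hc
  · simp [show j ≠ 0 by omega]; positivity
  · have h1 : c ^ j ≤ (c ^ (j + 2)) ^ m := by
      rw [← rpow_natCast c (j + 2), ← rpow_mul hc0, ← rpow_natCast c j]
      exact rpow_le_rpow_of_exponent_ge hc hc1 (by push_cast; linarith)
    calc a ^ m * c ^ j ≤ a ^ m * (c ^ (j + 2)) ^ m := by gcongr
      _ = (a * c ^ (j + 2)) ^ m := (mul_rpow ha (by positivity)).symm
      _ ≤ _ := rpow_le_add (by positivity) hδ hm0 hm1

lemma integral_rpow_mul_cut_le {w : Euc N → ℝ} (hw : Continuous w) (hw0 : ∀ y, 0 ≤ w y)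
    {m δ : ℝ} (hδ : 0 < δ) (hm0 : 0 < m) (hm1 : m < 1) {j : ℕ} (hj1 : 1 ≤ j)
    (hj : m * (j + 2) ≤ j) (x : Euc N) {r : ℝ} (hr : 0 < r) :
    ∫ y, w y ^ m * cut x r y ^ j ≤ δ ^ m * (r ^ N * volume.real (Metric.closedBall (0 : Euc N) 1))
      + δ ^ (m - 1) * ∫ y, w y * cut x r y ^ (j + 2) := by
  have hcut := continuous_cut x r
  have hi1 : Integrable (fun y => w y ^ m * cut x r y ^ j) volume :=
    integrable_of_zero ((hw.rpow_const fun _ => Or.inr hm0.le).mul (hcut.pow _))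
      (x := x) (r := r) fun y h => by simp [cut_eq_zero hr h, show j ≠ 0 by omega]
  have hi2 : Integrable (fun y => w y * cut x r y ^ (j + 2)) volume :=
    integrable_of_zero (hw.mul (hcut.pow _))
      (x := x) (r := r) fun y h => by simp [cut_eq_zero hr h]
  have hi3 : Integrable ((Metric.closedBall x r).indicator fun _ => δ ^ m) volume := by
    rw [integrable_indicator_iff measurableSet_closedBall]
    exact integrableOn_const (isCompact_closedBall x r).measure_lt_top.ne
  calc _ ≤ ∫ y, ((Metric.closedBall x r).indicator (fun _ => δ ^ m) y
        + δ ^ (m - 1) * (w y * cut x r y ^ (j + 2))) := by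
        refine integral_mono hi1 (hi3.add (hi2.const_mul _)) fun y => ?_
        by_cases hy : y ∈ Metric.closedBall x r
        · simp only [Set.indicator_of_mem hy]
          exact rpow_mul_pow_le (hw0 y) (cut_nonneg _ _ _) (cut_le_one _ _ _) hδ hm0 hm1 hj1 hj
        · simp [Set.indicator_of_notMem hy,
            cut_eq_zero hr (norm_sub_of_notMem_closedBall hy), show j ≠ 0 by omega]
    _ = _ := by
        rw [integral_add hi3 (hi2.const_mul _), integral_const_mul,
          integral_indicator_const _ measurableSet_closedBall,
          Measure.addHaar_real_closedBall' _ _ hr.le, finrank_euclideanSpace_fin, smul_eq_mul]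
        ring

/-- Herrero–Pierre mass control: the mass of a solution of `u_t = Δ u ^ m` in a large ball is
bounded by the initial mass and a term of order `R ^ (N - 2)`, so the averages of `∫ u ^ m` over
large balls tend to zero. -/
lemma average_small {u : ℝ → Euc N → ℝ} (hu : Continuous (Function.uncurry u))
    (hu0 : ∀ σ y, 0 ≤ u σ y) {m t : ℝ} (hm0 : 0 < m) (hm1 : m < 1) (ht : 0 < t) {j : ℕ}
    (hj1 : 1 ≤ j) (hj : m * (j + 2) ≤ j) (hN : 1 ≤ N) (x : Euc N)
    (hid : ∀ r, 0 < r → ∀ τ ∈ Set.Icc 0 t,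
      ∫ y, u τ y * cut x r y ^ (j + 2) = (∫ y, u 0 y * cut x r y ^ (j + 2))
        + ∫ σ in (0:ℝ)..τ, ∫ y, u σ y ^ m * lapCut j x r y)
    {f : Euc N → ℝ} (hf : Integrable f volume) (hfu : ∀ y, u 0 y ≤ f y)
    {ε : ℝ} (hε : 0 < ε) :
    ∀ᶠ R : ℝ in atTop, (R ^ N)⁻¹ * ∫ σ in (0:ℝ)..t, ∫ y, u σ y ^ m * cut x R y ^ (j + 1) ≤ ε := by
  set κ := volume.real (Metric.closedBall (0 : Euc N) 1) with hκ
  have hκ0 : 0 ≤ κ := measureReal_nonneg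
  set C : ℝ := (j + 2) * (4 * (j + 1) + 2 * N) with hC
  have hC0 : 0 ≤ C := by positivity
  set I := ∫ y, f y with hI
  have hus : ∀ σ, Continuous (u σ) := fun σ =>
    hu.comp (f := fun y : Euc N => (σ, y)) (by fun_prop)
  have hum : Continuous (Function.uncurry fun σ y => u σ y ^ m) :=
    hu.rpow_const fun _ => Or.inr hm0.le
  have hinc : ∀ i, 1 ≤ i → ∀ R, 0 < R → Continuous fun σ => ∫ y, u σ y ^ m * cut x R y ^ i := by
    intro i hi R hR
    refine continuous_integral_param (x := x) (r := R)
      (hum.mul (((continuous_cut x R).pow _).comp continuous_snd)) fun σ y h => by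
        simp [cut_eq_zero hR h, show i ≠ 0 by omega]
  -- the supremum over `[0, t]` of the localized mass
  have hS : ∀ R, 0 < R → t * C * (R ^ 2)⁻¹ ≤ 1 / 2 → ∃ S, 
      (∀ τ ∈ Set.Icc 0 t, ∫ y, u τ y * cut x R y ^ (j + 2) ≤ S) ∧
      S ≤ 2 * I + 2 * (t * C * (R ^ 2)⁻¹) * (R ^ N * κ) := by
    intro R hR hsmall
    have hYc : Continuous fun σ => ∫ y, u σ y * cut x R y ^ (j + 2) := by
      refine continuous_integral_param (x := x) (r := R)
        (hu.mul (((continuous_cut x R).pow _).comp continuous_snd)) fun σ y h => by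
          simp [cut_eq_zero hR h]
    obtain ⟨τ, hτ, hmax⟩ := isCompact_Icc.exists_isMaxOn (Set.nonempty_Icc.2 ht.le)
      hYc.continuousOn
    set S := ∫ y, u τ y * cut x R y ^ (j + 2) with hSdef
    have hS0 : 0 ≤ S := integral_nonneg fun y => mul_nonneg (hu0 _ _) (pow_nonneg (cut_nonneg _ _ _) _)
    refine ⟨S, fun s hs => hmax hs, ?_⟩
    have h0 : ∫ y, u 0 y * cut x R y ^ (j + 2) ≤ I := by
      refine integral_mono (integrable_of_zero ((hus 0).mul ((continuous_cut x R).pow _))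
        (x := x) (r := R) fun y h => by simp [cut_eq_zero hR h]) hf fun y => ?_
      refine le_trans ?_ (hfu y)
      exact mul_le_of_le_one_right (hu0 _ _) (pow_le_one₀ (cut_nonneg _ _ _) (cut_le_one _ _ _))
    have h1 : ∀ σ ∈ Set.Icc 0 τ, ∫ y, u σ y ^ m * lapCut j x R y
        ≤ C * (R ^ 2)⁻¹ * (R ^ N * κ + S) := by
      intro σ hσ
      have h2 := integral_rpow_mul_cut_le (hus σ) (hu0 σ) one_pos hm0 hm1 hj1 hj x hR
      rw [one_rpow, one_rpow, one_mul, one_mul] at h2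
      have h3 : ∫ y, u σ y ^ m * lapCut j x R y
          ≤ ∫ y, C * (R ^ 2)⁻¹ * (u σ y ^ m * cut x R y ^ j) := by
        have hp : Continuous fun y => u σ y ^ m := (hus σ).rpow_const fun _ => Or.inr hm0.le
        refine integral_mono
          (integrable_of_zero (x := x) (r := R) (hp.mul (continuous_lapCut j x R)) fun y h => by
            simp [lapCut_eq_zero hj1 hR h])
          ((integrable_of_zero (x := x) (r := R) (hp.mul ((continuous_cut x R).pow _)) fun y h => by
            simp [cut_eq_zero hR h, show j ≠ 0 by omega]).const_mul _) fun y => ?_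
        have h4 := (le_abs_self _).trans (abs_lapCut_le hj1 x hR y)
        have h5 : 0 ≤ u σ y ^ m := rpow_nonneg (hu0 _ _) _
        calc u σ y ^ m * lapCut j x R y ≤ u σ y ^ m * (C * (R ^ 2)⁻¹ * cut x R y ^ j) := by
              gcongr
          _ = _ := by ring
      rw [integral_const_mul] at h3
      refine h3.trans ?_
      have h6 := hmax (show σ ∈ Set.Icc 0 t from ⟨hσ.1, hσ.2.trans hτ.2⟩)
      gcongr
      refine h2.trans ?_
      gcongr
      exact h6
    have hcl : Continuous fun σ => ∫ y, u σ y ^ m * lapCut j x R y :=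
      continuous_integral_param (x := x) (r := R)
        (hum.mul ((continuous_lapCut j x R).comp continuous_snd)) fun σ y h => by
          simp [lapCut_eq_zero hj1 hR h]
    have h2 : ∫ σ in (0:ℝ)..τ, ∫ y, u σ y ^ m * lapCut j x R y
        ≤ τ * (C * (R ^ 2)⁻¹ * (R ^ N * κ + S)) := by
      have := intervalIntegral.integral_mono_on hτ.1 (hcl.intervalIntegrable 0 τ)
        (intervalIntegrable_const (μ := volume) (c := C * (R ^ 2)⁻¹ * (R ^ N * κ + S))) h1
      rwa [intervalIntegral.integral_const, sub_zero, smul_eq_mul] at this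
    have h3 := hid R hR τ hτ
    have h4 : τ * (C * (R ^ 2)⁻¹ * (R ^ N * κ + S)) ≤ t * (C * (R ^ 2)⁻¹ * (R ^ N * κ + S)) := by
      gcongr; exact hτ.2
    rw [← hSdef] at h3
    nlinarith
  -- `δ` makes the constant part of the Young-type splitting small
  set δ : ℝ := (ε / (2 * t * (κ + 1))) ^ (1 / m) with hδ
  have hδ0 : 0 < δ := by positivity
  have hδm : t * (δ ^ m * κ) ≤ ε / 2 := by
    rw [hδ, ← rpow_mul (by positivity), one_div_mul_cancel hm0.ne', rpow_one]
    rw [← mul_div_right_comm, mul_div_assoc', div_le_div_iff₀ (by positivity) (by norm_num)]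
    nlinarith [mul_pos hε ht]
  have hlim2 : Tendsto (fun R : ℝ => (R ^ 2)⁻¹) atTop (𝓝 0) :=
    tendsto_inv_atTop_zero.comp (tendsto_pow_atTop two_ne_zero)
  have hlimN : Tendsto (fun R : ℝ => (R ^ N)⁻¹) atTop (𝓝 0) :=
    tendsto_inv_atTop_zero.comp (tendsto_pow_atTop (by omega))
  have hl1 : Tendsto (fun R : ℝ => t * C * (R ^ 2)⁻¹) atTop (𝓝 0) := by
    simpa using hlim2.const_mul (t * C)
  have hl2 : Tendsto (fun R : ℝ => t * (δ ^ (m - 1) *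
      (2 * I * (R ^ N)⁻¹ + 2 * (t * C * (R ^ 2)⁻¹) * κ))) atTop (𝓝 0) := by
    simpa using (((hlimN.const_mul (2 * I)).add ((hl1.const_mul 2).mul_const κ)).const_mul
      (δ ^ (m - 1))).const_mul t
  filter_upwards [eventually_gt_atTop 0, hl1.eventually_le_const (by norm_num : (0:ℝ) < 1 / 2),
    hl2.eventually_le_const (half_pos hε)] with R hR hR1 hR2
  obtain ⟨S, hSb, hS⟩ := hS R hR hR1
  have h1 : ∀ σ ∈ Set.Icc 0 t, ∫ y, u σ y ^ m * cut x R y ^ (j + 1)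
      ≤ δ ^ m * (R ^ N * κ) + δ ^ (m - 1) * S := by
    intro σ hσ
    have h2 := integral_rpow_mul_cut_le (hus σ) (hu0 σ) hδ0 hm0 hm1 hj1 hj x hR
    have h3 : ∫ y, u σ y ^ m * cut x R y ^ (j + 1) ≤ ∫ y, u σ y ^ m * cut x R y ^ j := by
      have hp : Continuous fun y => u σ y ^ m := (hus σ).rpow_const fun _ => Or.inr hm0.le
      refine integral_mono
        (integrable_of_zero (x := x) (r := R) (hp.mul ((continuous_cut x R).pow _)) fun y h => by
          simp [cut_eq_zero hR h])
        (integrable_of_zero (x := x) (r := R) (hp.mul ((continuous_cut x R).pow _)) fun y h => by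
          simp [cut_eq_zero hR h, show j ≠ 0 by omega]) fun y => ?_
      exact mul_le_mul_of_nonneg_left (pow_le_pow_of_le_one (cut_nonneg _ _ _) (cut_le_one _ _ _)
        (Nat.le_succ j)) (rpow_nonneg (hu0 _ _) _)
    refine h3.trans (h2.trans ?_)
    gcongr
    exact hSb σ hσ
  have h2 : ∫ σ in (0:ℝ)..t, ∫ y, u σ y ^ m * cut x R y ^ (j + 1)
      ≤ t * (δ ^ m * (R ^ N * κ) + δ ^ (m - 1) * S) := by
    have := intervalIntegral.integral_mono_on ht.le
      ((hinc (j + 1) (by omega) R hR).intervalIntegrable 0 t)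
      (intervalIntegrable_const (μ := volume) (c := δ ^ m * (R ^ N * κ) + δ ^ (m - 1) * S)) h1
    rwa [intervalIntegral.integral_const, sub_zero, smul_eq_mul] at this
  calc _ ≤ (R ^ N)⁻¹ * (t * (δ ^ m * (R ^ N * κ) + δ ^ (m - 1) *
        (2 * I + 2 * (t * C * (R ^ 2)⁻¹) * (R ^ N * κ)))) := by
        refine mul_le_mul_of_nonneg_left (h2.trans ?_) (by positivity)
        gcongr
    _ = t * (δ ^ m * κ) + t * (δ ^ (m - 1) *
      (2 * I * (R ^ N)⁻¹ + 2 * (t * C * (R ^ 2)⁻¹) * κ)) := by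
        field_simp
    _ ≤ ε / 2 + ε / 2 := add_le_add hδm hR2
    _ = ε := add_halves ε

/-! ### Almost-subharmonicity and the pointwise bound -/

/-- Almost-subharmonicity of the time integral `∫ u ^ m`: its Laplacian is `u t - u 0 ≥ -f`, so its
weighted averages over balls about `x` can only drop with the radius as fast as the mass of `f`
allows. That mass is at most `A (r / ‖x‖) ^ (k + 1)` for `r ≤ ‖x‖` and at most `A` beyond; either
range contributes `A ‖x‖ ^ (-k)`. -/
lemma average_le {k : ℕ} (hk : 1 ≤ k) {u : ℝ → Euc (k + 2) → ℝ}
    (hu : Continuous (Function.uncurry u))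
    (hu0 : ∀ σ y, 0 ≤ u σ y) {m t : ℝ} (hm0 : 0 < m) (hm1 : m < 1) (ht : 0 < t) {j : ℕ}
    (hj1 : 1 ≤ j) (hj : m * (j + 2) ≤ j) (x : Euc (k + 2)) (hx : x ≠ 0)
    (hid : ∀ r, 0 < r → ∀ τ ∈ Set.Icc 0 t,
      ∫ y, u τ y * cut x r y ^ (j + 2) = (∫ y, u 0 y * cut x r y ^ (j + 2))
        + ∫ σ in (0:ℝ)..τ, ∫ y, u σ y ^ m * lapCut j x r y)
    {f : Euc (k + 2) → ℝ} (hf : Integrable f volume) (hf0 : ∀ y, 0 ≤ f y) (hfu : ∀ y, u 0 y ≤ f y)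
    {A : ℝ} (hA : ∫ y, f y ≤ A)
    (hA' : ∀ r, 0 ≤ r → ∫ y in Metric.closedBall x r, f y ≤ A * (r / ‖x‖) ^ (k + 1))
    {a : ℝ} (ha : 0 < a) (hax : a ≤ ‖x‖) :
    (a ^ (k + 2))⁻¹ * ∫ y, (∫ σ in (0:ℝ)..t, u σ y ^ m) * cut x a y ^ (j + 1)
      ≤ 2 * A * (‖x‖ ^ k)⁻¹ := by
  have hxp : 0 < ‖x‖ := norm_pos_iff.2 hx
  have hum : Continuous (Function.uncurry fun σ y => u σ y ^ m) :=
    hu.rpow_const fun _ => Or.inr hm0.le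
  set W : Euc (k + 2) → ℝ := fun y => ∫ σ in (0:ℝ)..t, u σ y ^ m with hW
  have hWc : Continuous W := by
    refine intervalIntegral.continuous_parametric_intervalIntegral_of_continuous' ?_ 0 t
    exact hum.comp continuous_swap
  -- Fubini for the two families of weights
  have hswap : ∀ {L : Euc (k + 2) → ℝ} {r : ℝ}, Continuous L → (∀ y, r ≤ ‖y - x‖ → L y = 0) →
      ∫ σ in (0:ℝ)..t, ∫ y, u σ y ^ m * L y = ∫ y, W y * L y := by
    intro L r hL hL0
    rw [integral_swap_param (x := x) (r := r) (hum.mul (hL.comp continuous_snd))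
      (fun σ y h => by simp [hL0 y h]) ht.le]
    refine integral_congr_ae (ae_of_all _ fun y => ?_)
    exact intervalIntegral.integral_mul_const _ _
  set M : ℝ → ℝ := fun r => ∫ y, W y * ((r ^ (k + 2))⁻¹ * cut x r y ^ (j + 1)) with hM
  have hMeq : ∀ r, M r = (r ^ (k + 2))⁻¹ * ∫ y, W y * cut x r y ^ (j + 1) := fun r => by
    rw [hM, ← integral_const_mul]
    refine integral_congr_ae (ae_of_all _ fun y => ?_)
    simp only; ring
  set D : ℝ → ℝ := fun r => r * (r ^ (k + 2))⁻¹ / (2 * (j + 2)) with hD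
  have hMd : ∀ r, 0 < r → HasDerivAt M (∫ y, W y * (D r * lapCut j x r y)) r := by
    intro r hr
    have hpos : ∀ s ∈ Set.Ioo (r / 2) (2 * r), 0 < s := fun s hs => (half_pos hr).trans hs.1
    refine hasDerivAt_integral_param (F' := fun r y => W y * (D r * lapCut j x r y))
      (x := x) (ρ := 2 * r) (isOpen_Ioo (a := r / 2) (b := 2 * r)) (fun s hs => ?_)
      (fun s hs y h => ?_) ?_ (fun s hs y h => ?_) (fun s hs y => ?_)
      ⟨half_lt_self hr, by linarith⟩
    · exact hWc.mul (continuous_const.mul ((continuous_cut x s).pow _))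
    · simp [cut_eq_zero (hpos s hs) (hs.2.le.trans h)]
    · have h1 : ∀ n, ∀ p ∈ Set.Ioo (r / 2) (2 * r) ×ˢ (Set.univ : Set (Euc (k + 2))),
          p.1 ^ n ≠ 0 := fun n p hp => pow_ne_zero _ (hpos _ hp.1).ne'
      have h2 : ContinuousOn (fun p : ℝ × Euc (k + 2) => cut x p.1 p.2)
          (Set.Ioo (r / 2) (2 * r) ×ˢ Set.univ) := by
        have h20 : ContinuousOn (fun p : ℝ × Euc (k + 2) => 1 - ‖p.2 - x‖ ^ 2 / p.1 ^ 2)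
            (Set.Ioo (r / 2) (2 * r) ×ˢ Set.univ) :=
          continuousOn_const.sub (ContinuousOn.div (by fun_prop) (by fun_prop) (h1 2))
        exact h20.sup continuousOn_const
      have h3 : ContinuousOn (fun p : ℝ × Euc (k + 2) => lapCut j x p.1 p.2)
          (Set.Ioo (r / 2) (2 * r) ×ˢ Set.univ) :=
        continuousOn_const.mul (((((continuousOn_const.mul (h2.pow j)).mul (by fun_prop)).div
          (by fun_prop) (h1 4))).sub ((continuousOn_const.mul (h2.pow (j + 1))).div
          (by fun_prop) (h1 2)))
      have h4 : ContinuousOn (fun p : ℝ × Euc (k + 2) => D p.1)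
          (Set.Ioo (r / 2) (2 * r) ×ˢ Set.univ) :=
        ((by fun_prop : ContinuousOn (fun p : ℝ × Euc (k + 2) => p.1) _).mul
          (ContinuousOn.inv₀ (by fun_prop) (h1 (k + 2)))).div_const _
      exact ((hWc.comp continuous_snd).continuousOn).mul (h4.mul h3)
    · simp [lapCut_eq_zero hj1 (hpos s hs) (hs.2.le.trans h)]
    · exact (hasDerivAt_cut_radius j hj1 x y (hpos s hs)).const_mul _
  have hD0 : ∀ r, 0 < r → 0 ≤ D r := fun r hr => by positivity
  have hD1 : ∀ r, 0 < r → D r ≤ (r ^ (k + 1))⁻¹ := by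
    intro r hr
    have h1 : r * (r ^ (k + 2))⁻¹ = (r ^ (k + 1))⁻¹ := by
        field_simp
        ring
    simp only [hD]
    rw [h1]
    refine div_le_self (by positivity) ?_
    have : (0:ℝ) ≤ j := Nat.cast_nonneg j
    linarith
  have hderiv : ∀ r, 0 < r → -((r ^ (k + 1))⁻¹ * ∫ y in Metric.closedBall x r, f y)
      ≤ ∫ y, W y * (D r * lapCut j x r y) := by
    intro r hr
    have h1 : ∫ y, W y * (D r * lapCut j x r y) = D r * ∫ y, W y * lapCut j x r y := by
      rw [← integral_const_mul]
      refine integral_congr_ae (ae_of_all _ fun y => ?_)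
      simp only; ring
    rw [h1, ← hswap (continuous_lapCut j x r) fun y h => lapCut_eq_zero hj1 hr h]
    have h2 := hid r hr t ⟨ht.le, le_rfl⟩
    have h3 : 0 ≤ ∫ y, u t y * cut x r y ^ (j + 2) :=
      integral_nonneg fun y => mul_nonneg (hu0 _ _) (pow_nonneg (cut_nonneg _ _ _) _)
    have h4 : ∫ y, u 0 y * cut x r y ^ (j + 2) ≤ ∫ y in Metric.closedBall x r, f y := by
      rw [← integral_indicator measurableSet_closedBall]
      have hus : Continuous (u 0) := hu.comp (f := fun y => ((0:ℝ), y)) (by fun_prop)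
      refine integral_mono (integrable_of_zero (x := x) (r := r)
        (hus.mul ((continuous_cut x r).pow _)) fun y h => by simp [cut_eq_zero hr h])
        (hf.indicator measurableSet_closedBall) fun y => ?_
      by_cases hy : y ∈ Metric.closedBall x r
      · rw [Set.indicator_of_mem hy]
        exact (mul_le_of_le_one_right (hu0 _ _) (pow_le_one₀ (cut_nonneg _ _ _)
          (cut_le_one _ _ _))).trans (hfu y)
      · simp [Set.indicator_of_notMem hy, cut_eq_zero hr (norm_sub_of_notMem_closedBall hy)]
    have h5 : 0 ≤ ∫ y in Metric.closedBall x r, f y := integral_nonneg hf0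
    have h6 := mul_le_mul_of_nonneg_right (hD1 r hr) h5
    have h7 : -(D r * ∫ y in Metric.closedBall x r, f y)
        ≤ D r * ∫ σ in (0:ℝ)..t, ∫ y, u σ y ^ m * lapCut j x r y := by
      rw [← mul_neg]
      exact mul_le_mul_of_nonneg_left (by linarith) (hD0 r hr)
    linarith
  have hmono : ∀ G g : ℝ → ℝ, (∀ r, 0 < r → HasDerivAt G (g r) r) →
      (∀ r, 0 < r → (r ^ (k + 1))⁻¹ * ∫ y in Metric.closedBall x r, f y ≤ g r) →
      ∀ p q, 0 < p → p ≤ q → M p + G p ≤ M q + G q := by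
    intro G g hG hg p q hp hpq
    have hd : ∀ r ∈ Set.Ioi (0:ℝ), HasDerivAt (fun r => M r + G r)
        ((∫ y, W y * (D r * lapCut j x r y)) + g r) r :=
      fun r hr => (hMd r hr).add (hG r hr)
    refine monotoneOn_of_deriv_nonneg (convex_Ioi (0:ℝ))
      (fun r hr => (hd r hr).continuousAt.continuousWithinAt)
      (fun r hr => (hd r (interior_subset hr)).differentiableAt.differentiableWithinAt)
      (fun r hr => ?_) (Set.mem_Ioi.2 hp) (Set.mem_Ioi.2 (hp.trans_le hpq)) hpq
    have hr' : 0 < r := Set.mem_Ioi.1 (interior_subset hr)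
    rw [(hd r hr').deriv]
    linarith [hderiv r hr', hg r hr']
  have hinner : M a ≤ M ‖x‖ + A * (‖x‖ ^ k)⁻¹ := by
    have h := hmono (fun r => A * (‖x‖ ^ (k + 1))⁻¹ * r) (fun r => A * (‖x‖ ^ (k + 1))⁻¹)
      (fun r _ => by simpa using (hasDerivAt_id r).const_mul (A * (‖x‖ ^ (k + 1))⁻¹))
      (fun r hr => ?_) a ‖x‖ ha hax
    · have hA0 : 0 ≤ A := (integral_nonneg hf0).trans hA
      have h1 : 0 ≤ A * (‖x‖ ^ (k + 1))⁻¹ * a := by positivity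
      have h2 : A * (‖x‖ ^ (k + 1))⁻¹ * ‖x‖ = A * (‖x‖ ^ k)⁻¹ := by
        field_simp
        ring
      simp only [h2] at h
      linarith
    · calc _ ≤ (r ^ (k + 1))⁻¹ * (A * (r / ‖x‖) ^ (k + 1)) := by
            gcongr; exact hA' r hr.le
        _ = _ := by
          rw [div_pow]
          field_simp
  have houter : ∀ R, ‖x‖ ≤ R → M ‖x‖ ≤ M R + A * (‖x‖ ^ k)⁻¹ := by
    intro R hR
    have hA0 : 0 ≤ A := (integral_nonneg hf0).trans hA
    have h := hmono (fun r => -(A * (r ^ k)⁻¹)) (fun r => A * (k * (r ^ (k + 1))⁻¹))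
      (fun r hr => ?_) (fun r hr => ?_) ‖x‖ R hxp hR
    · have : 0 ≤ A * (R ^ k)⁻¹ := by
        have := hxp.trans_le hR
        positivity
      linarith
    · refine ((((hasDerivAt_pow k r).inv (by positivity)).const_mul A).neg).congr_deriv ?_
      obtain ⟨i, rfl⟩ : ∃ i, k = i + 1 := ⟨k - 1, by omega⟩
      simp only [Nat.add_sub_cancel]
      field_simp
      ring
    · have h1 : ∫ y in Metric.closedBall x r, f y ≤ A :=
        (setIntegral_le_integral hf (ae_of_all _ hf0)).trans hA
      have h2 : (1:ℝ) ≤ k := by exact_mod_cast hk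
      calc _ ≤ (r ^ (k + 1))⁻¹ * A := by gcongr
        _ ≤ k * ((r ^ (k + 1))⁻¹ * A) := le_mul_of_one_le_left (by positivity) h2
        _ = _ := by ring
  rw [← hMeq]
  refine le_of_forall_pos_le_add fun ε hε => ?_
  have hev := average_small hu hu0 hm0 hm1 ht hj1 hj (by omega) x hid hf hfu hε
  obtain ⟨R, ⟨hR, hRx⟩, hR0⟩ := ((hev.and (eventually_ge_atTop ‖x‖)).and
    (eventually_gt_atTop 0)).exists
  rw [hswap (L := fun y => cut x R y ^ (j + 1)) (r := R) ((continuous_cut x R).pow _) fun y h => by simp [cut_eq_zero hR0 h],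
    ← hMeq] at hR
  linarith [houter R hRx]

/-- The weighted averages recover the value at the centre in the limit of small radii, up to a
universal factor. -/
lemma value_le_of_average_le (N j : ℕ) : ∃ κ : ℝ, 0 < κ ∧ ∀ (W : Euc N → ℝ) (x : Euc N) (B ρ : ℝ),
    Continuous W → (∀ y, 0 ≤ W y) → 0 < ρ →
    (∀ a, 0 < a → a ≤ ρ → (a ^ N)⁻¹ * ∫ y, W y * cut x a y ^ (j + 1) ≤ B) → κ * W x ≤ B := by
  set κ := (3 / 4 : ℝ) ^ (j + 1) * ((1 / 2) ^ N * volume.real (Metric.closedBall (0 : Euc N) 1))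
  refine ⟨κ / 2, ?_, fun W x B ρ hW hW0 hρ hB => ?_⟩
  · have : 0 < volume.real (Metric.closedBall (0 : Euc N) 1) :=
      ENNReal.toReal_pos (Metric.measure_closedBall_pos _ _ one_pos).ne'
        (isCompact_closedBall _ _).measure_lt_top.ne
    positivity
  · have hB0 : 0 ≤ B := le_trans (mul_nonneg (by positivity) (integral_nonneg fun y =>
      mul_nonneg (hW0 y) (pow_nonneg (cut_nonneg _ _ _) _))) (hB ρ hρ le_rfl)
    rcases (hW0 x).eq_or_lt with h0 | h0
    · rw [← h0]; simpa using hB0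
    obtain ⟨b, hb, hbW⟩ := Metric.nhds_basis_closedBall.eventually_iff.1
      (hW.continuousAt.eventually (lt_mem_nhds (half_lt_self h0)))
    set a := min b ρ with ha
    have ha0 : 0 < a := lt_min hb hρ
    have h1 : ∫ y, (Metric.closedBall x (a / 2)).indicator (fun _ => W x / 2 * (3 / 4) ^ (j + 1)) y
        ≤ ∫ y, W y * cut x a y ^ (j + 1) := by
      refine integral_mono ?_ (integrable_of_zero (x := x) (r := a)
        (hW.mul ((continuous_cut x a).pow _)) fun y h => by simp [cut_eq_zero ha0 h]) fun y => ?_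
      · rw [integrable_indicator_iff measurableSet_closedBall]
        exact integrableOn_const (isCompact_closedBall x _).measure_lt_top.ne
      · by_cases hy : y ∈ Metric.closedBall x (a / 2)
        · rw [Set.indicator_of_mem hy]
          have h2 : W x / 2 < W y := hbW (Metric.closedBall_subset_closedBall
            ((half_le_self ha0.le).trans (min_le_left _ _)) hy)
          have h3 : 3 / 4 ≤ cut x a y := by
            refine le_trans ?_ (le_max_left _ _)
            rw [Metric.mem_closedBall, dist_eq_norm] at hy
            have h4 : ‖y - x‖ ^ 2 ≤ (a / 2) ^ 2 := by gcongr
            have h5 : ‖y - x‖ ^ 2 / a ^ 2 ≤ 1 / 4 := by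
              rw [div_le_iff₀ (by positivity)]; linarith
            linarith
          gcongr
          exact hW0 y
        · rw [Set.indicator_of_notMem hy]
          exact mul_nonneg (hW0 y) (pow_nonneg (cut_nonneg _ _ _) _)
    rw [integral_indicator_const _ measurableSet_closedBall,
      Measure.addHaar_real_closedBall' _ _ (by positivity), finrank_euclideanSpace_fin,
      smul_eq_mul] at h1
    refine le_trans ?_ (hB a ha0 (min_le_right _ _))
    refine le_trans (le_of_eq ?_) (mul_le_mul_of_nonneg_left h1 (by positivity))
    simp only [κ, div_pow, one_pow]
    field_simp

/-- By the Aronson–Bénilan inequality `s ↦ s ^ (-1 / (1 - m)) v(x, s)` is nonincreasing, which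
bounds earlier values of the solution from below. -/
lemma lower_bound_of_AB {m T : ℝ} (hm1 : m < 1) {g : ℝ → ℝ}
    (hd : ∀ s ∈ Set.Ioo 0 T, DifferentiableAt ℝ g s) (hg : ∀ s ∈ Set.Ioo 0 T, 0 < g s)
    (hAB : ∀ s ∈ Set.Ioo 0 T, deriv g s ≤ g s / ((1 - m) * s)) {t : ℝ} (ht : t ∈ Set.Ioo 0 T)
    {s : ℝ} (hs : s ∈ Set.Icc (t / 2) t) : (1 / 2 : ℝ) ^ (1 / (1 - m)) * g t ≤ g s := by
  set q := 1 / (1 - m) with hq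
  have hq0 : 0 < q := one_div_pos.2 (by linarith)
  have hs0 : 0 < s := (half_pos ht.1).trans_le hs.1
  have hder : ∀ r ∈ Set.Ioo 0 T, HasDerivAt (fun r => g r * r ^ (-q))
      (deriv g r * r ^ (-q) + g r * (-q * r ^ (-q - 1))) r := fun r hr =>
    (hd r hr).hasDerivAt.mul (Real.hasDerivAt_rpow_const (Or.inl hr.1.ne'))
  have hanti : AntitoneOn (fun r => g r * r ^ (-q)) (Set.Ioo 0 T) := by
    refine antitoneOn_of_deriv_nonpos (convex_Ioo 0 T)
      (fun r hr => (hder r hr).continuousAt.continuousWithinAt)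
      (fun r hr => (hder r (interior_subset hr)).differentiableAt.differentiableWithinAt)
      fun r hr => ?_
    have hr' := interior_subset hr
    rw [(hder r hr').deriv]
    have h1 := hAB r hr'
    have h2 : g r / ((1 - m) * r) = q * g r * r⁻¹ := by
      rw [hq]; field_simp
    have h3 : r ^ (-q - 1) = r ^ (-q) * r⁻¹ := by
      rw [rpow_sub_one hr'.1.ne', div_eq_mul_inv]
    rw [h2] at h1
    have h4 : 0 ≤ r ^ (-q) := rpow_nonneg hr'.1.le _
    rw [h3]
    nlinarith [mul_le_mul_of_nonneg_right h1 h4]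
  have h1 : g t * t ^ (-q) ≤ g s * s ^ (-q) :=
    hanti ⟨hs0, hs.2.trans_lt ht.2⟩ ht hs.2
  have h2 : s ^ (-q) ≤ (t / 2) ^ (-q) :=
    rpow_le_rpow_of_nonpos (half_pos ht.1) hs.1 (by linarith)
  have h3 : (t / 2) ^ (-q) * (1 / 2) ^ q = t ^ (-q) := by
    rw [div_eq_mul_one_div t 2, mul_rpow ht.1.le (by norm_num), mul_assoc,
      ← rpow_add (by norm_num)]
    simp
  have h4 : 0 < t ^ (-q) := rpow_pos_of_pos ht.1 _
  have h5 : g s * s ^ (-q) ≤ g s * (t / 2) ^ (-q) :=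
    mul_le_mul_of_nonneg_left h2 (hg s ⟨hs0, hs.2.trans_lt ht.2⟩).le
  have h6 : 0 < (1 / 2 : ℝ) ^ q := by positivity
  have h7 : g t * t ^ (-q) * (1 / 2) ^ q ≤ g s * t ^ (-q) := by
    calc _ ≤ g s * (t / 2) ^ (-q) * (1 / 2) ^ q :=
          mul_le_mul_of_nonneg_right (h1.trans h5) h6.le
      _ = _ := by rw [mul_assoc, h3]
  refine le_of_mul_le_mul_right ?_ h4
  linarith

/-- A power of the cutoff high enough to absorb the nonlinearity in the mass estimate. -/
lemma exists_exponent {m : ℝ} (hm1 : m < 1) : ∃ j : ℕ, 1 ≤ j ∧ m * (j + 2) ≤ j := by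
  obtain ⟨j, hj⟩ := exists_nat_ge (max 1 (2 * m / (1 - m)))
  refine ⟨j, by exact_mod_cast (le_max_left _ _).trans hj, ?_⟩
  have h := (le_max_right _ _).trans hj
  rw [div_le_iff₀ (by linarith)] at h
  linarith

/-- The decay estimate in dimension `k + 2`, with exponent `k / m`, at every point off the origin. -/
theorem decay_aux {k : ℕ} (hk : 1 ≤ k) {m T : ℝ} (hm0 : 0 < m) (hm1 : m < 1)
    {v : Euc (k + 2) → ℝ → ℝ} {v₀ f : Euc (k + 2) → ℝ}
    (hv : IsFDESol (k + 2) m T v v₀)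
    (hAB : ∀ x, ∀ t ∈ Set.Ioo (0:ℝ) T, deriv (fun s => v x s) t ≤ v x t / ((1 - m) * t))
    (hf : Integrable f volume) (hfpos : ∀ x, 0 ≤ f x) (hfrad : IsRadial f)
    (hv0 : ∀ x, v₀ x ≤ f x) {t : ℝ} (ht : t ∈ Set.Ioo (0:ℝ) T) :
    ∃ C : ℝ, ∀ x, x ≠ 0 → v x t ≤ C / ‖x‖ ^ ((k : ℝ) / m) := by
  obtain ⟨j, hj1, hj⟩ := exists_exponent hm1
  obtain ⟨A₀, -, hA₀⟩ := exists_radial_mass_le hf hfpos hfrad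
  obtain ⟨κ, hκ, hval⟩ := value_le_of_average_le (k + 2) j
  set A := max A₀ (∫ y, f y) with hA
  set u := frozen v t with hu
  have huc : Continuous (Function.uncurry u) := continuous_frozen hv ht
  have hu0 : ∀ σ y, 0 ≤ u σ y := frozen_nonneg hv ht
  have hum : Continuous (Function.uncurry fun σ y => u σ y ^ m) :=
    huc.rpow_const fun _ => Or.inr hm0.le
  set W : Euc (k + 2) → ℝ := fun y => ∫ σ in (0:ℝ)..t, u σ y ^ m with hW
  have hWc : Continuous W := by
    refine intervalIntegral.continuous_parametric_intervalIntegral_of_continuous' ?_ 0 t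
    exact hum.comp continuous_swap
  have hW0 : ∀ y, 0 ≤ W y := fun y =>
    intervalIntegral.integral_nonneg ht.1.le fun σ _ => rpow_nonneg (hu0 _ _) _
  have hfu : ∀ y, u 0 y ≤ f y := fun y => by
    rw [hu, frozen_eq v ⟨le_rfl, ht.1.le⟩, hv.2.2.2.1]
    exact hv0 y
  set c : ℝ := (1 / 2 : ℝ) ^ (1 / (1 - m)) with hc
  have hc0 : 0 < c := by positivity
  set B : ℝ := 2 * A / (κ * (t / 2) * c ^ m) with hB
  have htp := ht.1
  refine ⟨B ^ (1 / m), fun x hx => ?_⟩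
  have hxp : 0 < ‖x‖ := norm_pos_iff.2 hx
  have hA0 : 0 ≤ A := (integral_nonneg hfpos).trans (le_max_right _ _)
  have h1 : κ * W x ≤ 2 * A * (‖x‖ ^ k)⁻¹ :=
    hval W x _ ‖x‖ hWc hW0 hxp fun a ha hax =>
      average_le hk huc hu0 hm0 hm1 ht.1 hj1 hj x hx
        (fun r hr τ hτ => mass_identity hm0 hv ht hj1 x hr hτ) hf hfpos hfu (le_max_right _ _)
        (fun r hr => (hA₀ x r hx hr).trans
          (mul_le_mul_of_nonneg_right (le_max_left _ _) (by positivity))) ha hax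
  have hvx : 0 < v x t := hv.1 x t ht
  have h2 : t / 2 * (c ^ m * v x t ^ m) ≤ W x := by
    have hux : Continuous fun σ => u σ x ^ m :=
      hum.comp (f := fun σ : ℝ => (σ, x)) (by fun_prop)
    have hlow : ∀ σ ∈ Set.Icc (t / 2) t, c ^ m * v x t ^ m ≤ u σ x ^ m := by
      intro σ hσ
      rw [← mul_rpow hc0.le hvx.le, hu,
        frozen_eq v ⟨(half_pos ht.1).le.trans hσ.1, hσ.2⟩]
      refine rpow_le_rpow (by positivity) ?_ hm0.le
      refine lower_bound_of_AB hm1 (fun s hs => ?_) (hv.1 x) (hAB x) ht hσ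
      have h3 : ContDiffAt ℝ (⊤ : ℕ∞) (fun p : Euc (k + 2) × ℝ => v p.1 p.2) (x, s) :=
        hv.2.1.contDiffAt ((isOpen_univ.prod isOpen_Ioo).mem_nhds ⟨trivial, hs⟩)
      exact (h3.differentiableAt (by simp)).comp s (f := fun s : ℝ => (x, s))
        (by fun_prop)
    have h4 := intervalIntegral.integral_mono_on (half_le_self ht.1.le)
      (intervalIntegrable_const (μ := volume) (c := c ^ m * v x t ^ m))
      (hux.intervalIntegrable (t / 2) t) hlow
    rw [intervalIntegral.integral_const, smul_eq_mul, sub_half] at h4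
    have h5 : 0 ≤ ∫ σ in (0:ℝ)..(t / 2), u σ x ^ m :=
      intervalIntegral.integral_nonneg (half_pos ht.1).le fun σ _ => rpow_nonneg (hu0 _ _) _
    have h6 := intervalIntegral.integral_add_adjacent_intervals
      (hux.intervalIntegrable (μ := volume) 0 (t / 2)) (hux.intervalIntegrable (t / 2) t)
    simp only [hW]
    linarith
  have h3 : v x t ^ m ≤ B / ‖x‖ ^ k := by
    have h4 := (mul_le_mul_of_nonneg_left h2 hκ.le).trans h1
    rw [hB, div_div, le_div_iff₀ (by positivity)]
    rw [← div_eq_mul_inv, le_div_iff₀ (by positivity)] at h4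
    linarith
  calc v x t = (v x t ^ m) ^ (1 / m) := by
        rw [← rpow_mul hvx.le, mul_one_div_cancel hm0.ne', rpow_one]
    _ ≤ (B / ‖x‖ ^ k) ^ (1 / m) := rpow_le_rpow (by positivity) h3 (by positivity)
    _ = _ := by
        rw [div_rpow (by positivity) (by positivity), ← rpow_natCast, ← rpow_mul hxp.le,
          mul_one_div]

end FDE

/-- Pointwise decay: if v is a solution satisfying the Aronson–Bénilan
inequality whose initial value is bounded by a nonnegative radially symmetric L¹ function,
then at each positive time, v(x,t) ≤ C(t)/|x|^{(N-2)/m} for |x| > 1. -/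
theorem pointwise_decay (N : ℕ) (hN : 3 ≤ N) (m T : ℝ)
    (hm0 : 0 < m) (hm1 : m < ((N : ℝ) - 2) / N) (hT : 0 < T)
    (v : Euc N → ℝ → ℝ) (v₀ : Euc N → ℝ) (f : Euc N → ℝ)
    (hv : IsFDESol N m T v v₀)
    (hAB : ∀ x : Euc N, ∀ t ∈ Set.Ioo (0:ℝ) T,
      deriv (fun s => v x s) t ≤ v x t / ((1 - m) * t))
    (hf : Integrable f volume) (hfpos : ∀ x, 0 ≤ f x) (hfrad : IsRadial f)
    (hv0 : ∀ x, v₀ x ≤ f x) :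
    ∀ t ∈ Set.Ioo (0:ℝ) T, ∃ C : ℝ, ∀ x : Euc N, 1 < ‖x‖ →
      v x t ≤ C / ‖x‖ ^ (((N : ℝ) - 2) / m) := by
  intro t ht
  obtain ⟨k, rfl⟩ : ∃ k, N = k + 2 := ⟨N - 2, by omega⟩
  have hk : ((k + 2 : ℕ) : ℝ) - 2 = k := by push_cast; ring
  have hm : m < 1 := by
    refine hm1.trans ?_
    rw [div_lt_one (by positivity)]
    linarith
  obtain ⟨C, hC⟩ := FDE.decay_aux (by omega) hm0 hm hv hAB hf hfpos hfrad hv0 ht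
  refine ⟨C, fun x hx => ?_⟩
  rw [hk]
  exact hC x (norm_pos_iff.1 (one_pos.trans hx))
end
end
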